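/- Suppose the disturbance system is UBIBS with respect to Ω and uniformly output stable with respect to Ω. Then there exist a smooth function V : ℝⁿ → [0,∞), class-K∞ functions α₁, α₂, and a function α₃ : [0,∞)² → [0,∞) which is of class K in its first argument for each fixed value of its second argument and nonincreasing in its second argument, such that: (1) α₁(|h(ξ)|) ≤ V(ξ) ≤ α₂(|ξ|) for all ξ ∈ ℝⁿ; and (2) ∇V(ξ)·f(ξ,μ) ≤ -α₃(V(ξ), |ξ|) for all ξ ∈ ℝⁿ and all μ ∈ Ω. Moreover, if in addition there is a class-K function σ₀ such that |y(t,ξ,d)| ≤ σ₀(|h(ξ)|) for all t ≥ 0, all ξ and all d ∈ M_Ω, then V can be chosen so that α₁(|h(ξ)|) ≤ V(ξ) ≤ α₂(|h(ξ)|) for all ξ. Finally, if the stronger estimate |y(t,ξ,d)| ≤ β(|h(ξ)|, t) holds for all t ≥ 0, all ξ and all d ∈ M_Ω (with β of class KL), then V can be chosen so that, in addition, the decay estimate is state independent: ∇V(ξ)·f(ξ,μ) ≤ -α₃(V(ξ)) for all ξ ∈ ℝⁿ and all μ ∈ Ω, for some class-K function α₃. -/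

import Mathlib

open MeasureTheory Set Filter Topology
open scoped ENNReal NNReal

noncomputable section

/-- A function of class `K`: continuous, strictly increasing on `[0,∞)` and vanishing at `0`. -/
def IsClassK (α : ℝ → ℝ) : Prop :=
  ContinuousOn α (Ici 0) ∧ StrictMonoOn α (Ici 0) ∧ α 0 = 0

/-- A function of class `K∞`: class `K` and unbounded. -/
def IsClassKInfty (α : ℝ → ℝ) : Prop :=
  IsClassK α ∧ Tendsto α atTop atTop

/-- A function of class `KL`. -/
def IsClassKL (β : ℝ → ℝ → ℝ) : Prop :=
  (∀ t ∈ Ici (0:ℝ), IsClassK fun s => β s t) ∧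
  ∀ s ∈ Ici (0:ℝ), AntitoneOn (fun t => β s t) (Ici 0) ∧
    Tendsto (fun t => β s t) atTop (𝓝 0)

/-- `d` belongs to `M_Ω`: it is a measurable function taking values in `Ω` on `[0,∞)`. -/
def MemMOmega {m : ℕ} (Ω : Set (EuclideanSpace ℝ (Fin m)))
    (d : ℝ → EuclideanSpace ℝ (Fin m)) : Prop :=
  Measurable d ∧ ∀ t ∈ Ici (0:ℝ), d t ∈ Ω

/-- `x` is the solution map of the forward-complete disturbance system `ẋ = f(x,d)`:
for every initial state `ξ` and every `d ∈ M_Ω`, `t ↦ x t ξ d` solves the corresponding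
integral equation on all of `[0,∞)`. -/
def IsSolutionMapOmega {n m : ℕ} (Ω : Set (EuclideanSpace ℝ (Fin m)))
    (f : EuclideanSpace ℝ (Fin n) → EuclideanSpace ℝ (Fin m) → EuclideanSpace ℝ (Fin n))
    (x : ℝ → EuclideanSpace ℝ (Fin n) → (ℝ → EuclideanSpace ℝ (Fin m)) →
      EuclideanSpace ℝ (Fin n)) : Prop :=
  ∀ ξ d, MemMOmega Ω d → ∀ t ∈ Ici (0:ℝ),
    x t ξ d = ξ + ∫ s in (0:ℝ)..t, f (x s ξ d) (d s)

/-- The system is uniformly bounded-input bounded-state (UBIBS) with respect to `Ω`. -/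
def IsUBIBS {n m : ℕ} (Ω : Set (EuclideanSpace ℝ (Fin m)))
    (f : EuclideanSpace ℝ (Fin n) → EuclideanSpace ℝ (Fin m) → EuclideanSpace ℝ (Fin n))
    (x : ℝ → EuclideanSpace ℝ (Fin n) → (ℝ → EuclideanSpace ℝ (Fin m)) →
      EuclideanSpace ℝ (Fin n)) : Prop :=
  IsSolutionMapOmega Ω f x ∧ ∃ (σ : ℝ → ℝ) (c : ℝ), IsClassK σ ∧ 0 ≤ c ∧
    ∀ ξ d, MemMOmega Ω d → ∀ t ∈ Ici (0:ℝ), ‖x t ξ d‖ ≤ max (σ ‖ξ‖) c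

/-- The system is uniformly output stable with respect to `Ω`. -/
def IsUOS {n m p : ℕ} (Ω : Set (EuclideanSpace ℝ (Fin m)))
    (h : EuclideanSpace ℝ (Fin n) → EuclideanSpace ℝ (Fin p))
    (x : ℝ → EuclideanSpace ℝ (Fin n) → (ℝ → EuclideanSpace ℝ (Fin m)) →
      EuclideanSpace ℝ (Fin n)) : Prop :=
  ∃ β : ℝ → ℝ → ℝ, IsClassKL β ∧
    ∀ ξ d, MemMOmega Ω d → ∀ t ∈ Ici (0:ℝ), ‖h (x t ξ d)‖ ≤ β ‖ξ‖ t

/-!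
The candidate is the supremum of the weighted outputs `(2 - 1 / (1 + t)) ‖h (x t ξ d)‖` over all
times `t ≥ 0` and all admissible disturbances. The `KL` estimate confines this supremum, near any
state where it is positive, to a bounded time window; hence it is continuous, and as the weight is
strictly increasing it decreases linearly in time along every trajectory. Since trajectories depend
in a Lipschitz way on the initial state, the decrease persists, at a smaller rate, along straight
lines with directions near `f ξ μ`. It therefore survives mollification with a small enough
state-dependent radius. For each positive level the part of the supremum above that level is
mollified, and the results are summed with rapidly decreasing weights. The rate found on each band
of values is finally turned into a class-`K` rate. When `‖h ξ‖` itself dominates the output, the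
rate no longer depends on the state, except possibly for large values, and composing with a `K∞`
function that grows fast enough removes this dependence.
-/

/-! ### Smooth positive minorants -/

theorem exists_antitone_choice {P : ℝ → ℝ → Prop}
    (hP : ∀ {b b' c c'}, P b c → b' ≤ b → 0 < c' → c' ≤ c → P b' c')
    (h : ∀ b, ∃ c, 0 < c ∧ P b c) :
    ∃ m : ℝ → ℝ, Antitone m ∧ ∀ b, 0 < m b ∧ m b ≤ 1 ∧ P b (m b) := by
  choose c hc hPc using h
  have hne : ∀ N : ℕ, (Finset.range (N + 1)).Nonempty := fun N => ⟨0, by simp⟩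
  let C : ℕ → ℝ := fun N => (Finset.range (N + 1)).inf' (hne N) fun j => min 1 (c j)
  have hC_pos : ∀ N, 0 < C N := fun N =>
    (Finset.lt_inf'_iff _).2 fun j _ => lt_min one_pos (hc j)
  have hC_le : ∀ N, C N ≤ min 1 (c N) := fun N =>
    Finset.inf'_le (fun j : ℕ => min 1 (c j)) (by simp)
  have hC_anti : Antitone C := fun N M hNM => Finset.inf'_mono _ (by simpa using hNM) _
  exact ⟨fun b => C ⌈b⌉₊, fun a b hab => hC_anti (Nat.ceil_mono hab), fun b =>
    ⟨hC_pos _, (hC_le _).trans (min_le_left _ _),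
      hP (hPc ⌈b⌉₊) (Nat.le_ceil b) (hC_pos _) ((hC_le _).trans (min_le_right _ _))⟩⟩

theorem contDiff_intervalIntegral_right {E : Type*} [NormedAddCommGroup E] [NormedSpace ℝ E]
    [CompleteSpace E] {e : ℝ → E} (he : ContDiff ℝ (⊤ : ℕ∞) e) (a : ℝ) :
    ContDiff ℝ (⊤ : ℕ∞) fun b => ∫ u in a..b, e u := by
  refine contDiff_infty_iff_deriv.2
    ⟨intervalIntegral.differentiable_integral_of_continuous he.continuous, ?_⟩
  rwa [funext (he.continuous.deriv_integral e a)]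

theorem exists_contDiff_pos_le_of_antitone {m : ℝ → ℝ} (hm : Antitone m) (hpos : ∀ b, 0 < m b) :
    ∃ e : ℝ → ℝ, ContDiff ℝ (⊤ : ℕ∞) e ∧ ∀ b, 0 < e b ∧ e b ≤ m b := by
  obtain ⟨e, he⟩ := exists_contMDiffMap_forall_mem_convex_of_local_const (n := (⊤ : ℕ∞))
    (modelWithCornersSelf ℝ ℝ) (t := fun b : ℝ => Ioc 0 (m b)) (fun b => convex_Ioc 0 (m b))
    (fun b => ⟨m (b + 1), by
      filter_upwards [Iio_mem_nhds (lt_add_one b)] with y hy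
      exact ⟨hpos _, hm (le_of_lt hy)⟩⟩)
  exact ⟨e, e.contMDiff.contDiff, he⟩

theorem exists_contDiff_pos_abs_deriv_le_of_antitone {m : ℝ → ℝ} (hm : Antitone m)
    (hpos : ∀ b, 0 < m b) :
    ∃ θ : ℝ → ℝ, ContDiff ℝ (⊤ : ℕ∞) θ ∧ ∀ b, 0 < θ b ∧ θ b ≤ m b ∧ |deriv θ b| ≤ m b := by
  obtain ⟨e, he, hem⟩ := exists_contDiff_pos_le_of_antitone hm hpos
  have hint : ∀ a b, IntervalIntegrable e volume a b := he.continuous.intervalIntegrable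
  have hE := contDiff_intervalIntegral_right he 0
  -- A primitive is used so that the derivative at `b` is the difference `e (b + 1) - e b`.
  refine ⟨fun b => (∫ u in (0 : ℝ)..(b + 1), e u) - ∫ u in (0 : ℝ)..b, e u,
    (hE.comp (contDiff_id.add contDiff_const)).sub hE, fun b => ?_⟩
  have hd : ∀ b, HasDerivAt (fun b => ∫ u in (0 : ℝ)..b, e u) (e b) b :=
    fun b => he.continuous.integral_hasStrictDerivAt 0 b |>.hasDerivAt
  have hderiv := (((hd (b + 1)).comp_add_const b 1).sub (hd b)).deriv
  rw [Pi.sub_def] at hderiv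
  rw [hderiv]
  beta_reduce
  rw [intervalIntegral.integral_interval_sub_left (hint _ _) (hint _ _)]
  refine ⟨intervalIntegral.intervalIntegral_pos_of_pos (hint _ _) (fun u => (hem u).1)
    (lt_add_one b), ?_, ?_⟩
  · calc ∫ u in b..(b + 1), e u ≤ ∫ _ in b..(b + 1), m b :=
          intervalIntegral.integral_mono_on (by linarith) (hint _ _)
            intervalIntegrable_const fun u hu => (hem u).2.trans (hm hu.1)
      _ = m b := by simp
  · have hm' := hm (lt_add_one b).le
    have hb := hem b
    have hb' := hem (b + 1)
    exact abs_le.2 ⟨by linarith, by linarith⟩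

theorem norm_fderiv_comp_norm_sq_le {X : Type*} [NormedAddCommGroup X] [InnerProductSpace ℝ X]
    {θ : ℝ → ℝ} {ξ : X} (hθ : DifferentiableAt ℝ θ (‖ξ‖ ^ 2)) :
    ‖fderiv ℝ (fun ξ => θ (‖ξ‖ ^ 2)) ξ‖ ≤ |deriv θ (‖ξ‖ ^ 2)| * (2 * ‖ξ‖) := by
  have h := hθ.hasDerivAt.comp_hasFDerivAt ξ (hasStrictFDerivAt_norm_sq ξ).hasFDerivAt
  rw [Function.comp_def] at h
  rw [h.fderiv, norm_smul, Real.norm_eq_abs]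
  gcongr
  simpa [innerSL_apply_norm] using norm_nsmul_le (n := 2) (a := innerSL ℝ ξ)

theorem exists_contDiff_radius_of_antitone {X : Type*} [NormedAddCommGroup X]
    [InnerProductSpace ℝ X] {m : ℝ → ℝ} (hm : Antitone m) (hpos : ∀ b, 0 < m b) :
    ∃ r : X → ℝ, ContDiff ℝ (⊤ : ℕ∞) r ∧
      ∀ ξ, 0 < r ξ ∧ r ξ ≤ m ‖ξ‖ ∧ ‖fderiv ℝ r ξ‖ ≤ m ‖ξ‖ := by
  -- The factor `1 + u` absorbs the gradient `2 ξ` of `‖ξ‖²`, and `b ≤ 1 + b²` allows to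
  -- evaluate `m` at the smooth quantity `1 + ‖ξ‖²` in place of `‖ξ‖`.
  let m' : ℝ → ℝ := fun u => m (1 + u) / (1 + max u 0)
  have hden : ∀ u : ℝ, 0 < 1 + max u 0 := fun u => by positivity
  have hm'_pos : ∀ u, 0 < m' u := fun u => div_pos (hpos _) (hden u)
  have hm' : Antitone m' := fun u v huv =>
    div_le_div₀ (hpos _).le (hm (by linarith)) (hden u) (by gcongr)
  have hm'_le : ∀ ξ : X, m' (‖ξ‖ ^ 2) * (1 + ‖ξ‖ ^ 2) ≤ m ‖ξ‖ := fun ξ => by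
    simp only [m', max_eq_left (sq_nonneg ‖ξ‖)]
    rw [div_mul_cancel₀ _ (by positivity)]
    exact hm (by nlinarith [sq_nonneg (‖ξ‖ - 1)])
  obtain ⟨θ, hθ, hθm⟩ := exists_contDiff_pos_abs_deriv_le_of_antitone hm' hm'_pos
  refine ⟨fun ξ => θ (‖ξ‖ ^ 2), hθ.comp (contDiff_norm_sq ℝ), fun ξ => ⟨(hθm _).1, ?_, ?_⟩⟩
  · refine ((hθm _).2.1.trans ?_).trans (hm'_le ξ)
    exact le_mul_of_one_le_right (hm'_pos _).le (le_add_of_nonneg_right (sq_nonneg _))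
  · calc ‖fderiv ℝ (fun ξ => θ (‖ξ‖ ^ 2)) ξ‖ ≤ |deriv θ (‖ξ‖ ^ 2)| * (2 * ‖ξ‖) :=
          norm_fderiv_comp_norm_sq_le (hθ.differentiable (by simp) _)
      _ ≤ m' (‖ξ‖ ^ 2) * (1 + ‖ξ‖ ^ 2) :=
          mul_le_mul (hθm _).2.2 (by nlinarith [sq_nonneg (‖ξ‖ - 1)]) (by positivity)
            (hm'_pos _).le
      _ ≤ m ‖ξ‖ := hm'_le ξ

theorem exists_contDiff_radius {X : Type*} [NormedAddCommGroup X] [InnerProductSpace ℝ X]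
    {P : X → ℝ → Prop} (hP : ∀ {ξ c c'}, P ξ c → 0 < c' → c' ≤ c → P ξ c')
    (h : ∀ R, ∃ c, 0 < c ∧ ∀ ξ, ‖ξ‖ ≤ R → P ξ c) :
    ∃ r δ : X → ℝ, ContDiff ℝ (⊤ : ℕ∞) r ∧
      ∀ ξ, 0 < r ξ ∧ r ξ ≤ δ ξ ∧ ‖fderiv ℝ r ξ‖ ≤ δ ξ ∧ δ ξ ≤ 1 ∧ P ξ (δ ξ) := by
  obtain ⟨m, hm, hmP⟩ := exists_antitone_choice
    (P := fun R c => ∀ ξ : X, ‖ξ‖ ≤ R → P ξ c)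
    (fun hc hR hc' hcc' ξ hξ => hP (hc ξ (hξ.trans hR)) hc' hcc') h
  obtain ⟨r, hr, hrm⟩ := exists_contDiff_radius_of_antitone (X := X) hm fun b => (hmP b).1
  exact ⟨r, fun ξ => m ‖ξ‖, hr, fun ξ => ⟨(hrm ξ).1, (hrm ξ).2.1, (hrm ξ).2.2, (hmP _).2.1,
    (hmP _).2.2 ξ le_rfl⟩⟩

/-! ### Smooth weighted series -/

theorem exists_weights_summable {ι : Type*} [Countable ι] {B : ι → ℕ → ℝ}
    (hB : ∀ i k, 0 ≤ B i k) :
    ∃ δ : ℕ → ℝ, (∀ k, 0 < δ k ∧ δ k ≤ (1 / 2) ^ k) ∧ ∀ i, Summable fun k => δ k * B i k := by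
  obtain ⟨g, hg⟩ := exists_injective_nat ι
  let s : ℕ → Finset ι := fun k => ((finite_Iic k).preimage hg.injOn).toFinset
  let S : ℕ → ℝ := fun k => ∑ i ∈ s k, B i k
  have hS : ∀ k, 0 ≤ S k := fun k => Finset.sum_nonneg fun i _ => hB i k
  have hBS : ∀ i k, g i ≤ k → B i k ≤ S k := fun i k hik =>
    Finset.single_le_sum (f := fun i => B i k) (fun i _ => hB i k) (by simpa [s] using hik)
  have hδ : ∀ k, 0 < (1 / 2 : ℝ) ^ k / (1 + S k) := fun k =>
    div_pos (by positivity) (by linarith [hS k])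
  refine ⟨fun k => (1 / 2) ^ k / (1 + S k),
    fun k => ⟨hδ k, div_le_self (by positivity) (by linarith [hS k])⟩, fun i => ?_⟩
  refine Summable.of_norm_bounded_eventually_nat (g := fun k => (1 / 2 : ℝ) ^ k)
    summable_geometric_two ?_
  filter_upwards [eventually_ge_atTop (g i)] with k hk
  rw [Real.norm_eq_abs, abs_of_nonneg (mul_nonneg (hδ k).le (hB i k)), div_mul_eq_mul_div]
  refine (div_le_iff₀ (by linarith [hS k])).2 ?_
  gcongr
  linarith [hBS i k hk]

section WeightedSeries

variable {X : Type*} [NormedAddCommGroup X] [NormedSpace ℝ X]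

theorem exists_norm_iteratedFDeriv_le_of_hasCompactSupport {F : X → ℝ}
    (hF : ContDiff ℝ (⊤ : ℕ∞) F) (hc : HasCompactSupport F) (j : ℕ) :
    ∃ B, 0 ≤ B ∧ ∀ ξ, ‖iteratedFDeriv ℝ j F ξ‖ ≤ B := by
  obtain ⟨B, hB⟩ := (hc.iteratedFDeriv j).exists_bound_of_continuous
    (hF.continuous_iteratedFDeriv (mod_cast le_top))
  exact ⟨B, (norm_nonneg _).trans (hB 0), hB⟩

variable {ι : Type*} {δ : ι → ℝ} {H : ι → X → ℝ} {B : ℕ → ι → ℝ}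

theorem norm_iteratedFDeriv_const_mul_le (hδ : ∀ k, 0 ≤ δ k)
    (hH : ∀ k, ContDiff ℝ (⊤ : ℕ∞) (H k)) (hB : ∀ j k ξ, ‖iteratedFDeriv ℝ j (H k) ξ‖ ≤ B j k)
    (j : ℕ) (k : ι) (ξ : X) :
    ‖iteratedFDeriv ℝ j (fun ξ => δ k * H k ξ) ξ‖ ≤ δ k * B j k := by
  rw [show (fun ξ => δ k * H k ξ) = δ k • H k from rfl,
    iteratedFDeriv_const_smul_apply ((hH k).contDiffAt.of_le (mod_cast le_top)),
    norm_smul, Real.norm_eq_abs, abs_of_nonneg (hδ k)]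
  exact mul_le_mul_of_nonneg_left (hB j k ξ) (hδ k)

theorem contDiff_tsum_const_mul (hδ : ∀ k, 0 ≤ δ k) (hH : ∀ k, ContDiff ℝ (⊤ : ℕ∞) (H k))
    (hB : ∀ j k ξ, ‖iteratedFDeriv ℝ j (H k) ξ‖ ≤ B j k)
    (hs : ∀ j, Summable fun k => δ k * B j k) :
    ContDiff ℝ (⊤ : ℕ∞) fun ξ => ∑' k, δ k * H k ξ :=
  contDiff_tsum (fun k => contDiff_const.mul (hH k)) (fun j _ => hs j)
    fun j k ξ _ => norm_iteratedFDeriv_const_mul_le hδ hH hB j k ξ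

theorem hasSum_fderiv_tsum_const_mul (hδ : ∀ k, 0 ≤ δ k) (hH : ∀ k, ContDiff ℝ (⊤ : ℕ∞) (H k))
    (hB : ∀ j k ξ, ‖iteratedFDeriv ℝ j (H k) ξ‖ ≤ B j k)
    (hs : ∀ j, Summable fun k => δ k * B j k) (ξ w : X) :
    HasSum (fun k => δ k * fderiv ℝ (H k) ξ w) (fderiv ℝ (fun ξ => ∑' k, δ k * H k ξ) ξ w) := by
  have hd : ∀ k x, HasFDerivAt (fun ξ => δ k * H k ξ) (δ k • fderiv ℝ (H k) x) x := fun k x =>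
    ((hH k).differentiable (by simp) x).hasFDerivAt.const_mul (δ k)
  have hd_le : ∀ k x, ‖δ k • fderiv ℝ (H k) x‖ ≤ δ k * B 1 k := fun k x => by
    rw [norm_smul, Real.norm_of_nonneg (hδ k), ← norm_iteratedFDeriv_one]
    exact mul_le_mul_of_nonneg_left (hB 1 k x) (hδ k)
  have hsum : Summable fun k => δ k * H k ξ := by
    refine Summable.of_norm_bounded (hs 0) fun k => ?_
    rw [norm_mul, Real.norm_of_nonneg (hδ k), ← norm_iteratedFDeriv_zero (𝕜 := ℝ) (f := H k)]
    exact mul_le_mul_of_nonneg_left (hB 0 k ξ) (hδ k)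
  rw [(hasFDerivAt_tsum (hs 1) hd hd_le hsum ξ).fderiv]
  have hsum_fderiv := (Summable.of_norm_bounded (hs 1) fun k => hd_le k ξ).hasSum
  simpa only [Function.comp_def, ContinuousLinearMap.apply_apply, smul_apply, smul_eq_mul]
    using (ContinuousLinearMap.apply ℝ ℝ w).hasSum hsum_fderiv

theorem exists_weights_contDiff_tsum [FiniteDimensional ℝ X] {F : ℕ → X → ℝ}
    (hF : ∀ k, ContDiff ℝ (⊤ : ℕ∞) (F k)) :
    ∃ δ : ℕ → ℝ, (∀ k, 0 < δ k ∧ δ k ≤ (1 / 2) ^ k) ∧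
      ContDiff ℝ (⊤ : ℕ∞) (fun ξ => ∑' k, δ k * F k ξ) ∧
      ∀ ξ w, HasSum (fun k => δ k * fderiv ℝ (F k) ξ w)
        (fderiv ℝ (fun ξ => ∑' k, δ k * F k ξ) ξ w) := by
  let χ : ℕ → ContDiffBump (0 : X) := fun N => ⟨N + 1, N + 2, by positivity, by linarith⟩
  let H : ℕ → ℕ → X → ℝ := fun N k ξ => χ N ξ * F k ξ
  have hH : ∀ N k, ContDiff ℝ (⊤ : ℕ∞) (H N k) := fun N k => (χ N).contDiff.mul (hF k)
  have hbound : ∀ N k j, ∃ B, 0 ≤ B ∧ ∀ ξ, ‖iteratedFDeriv ℝ j (H N k) ξ‖ ≤ B := fun N k =>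
    exists_norm_iteratedFDeriv_le_of_hasCompactSupport (hH N k)
      (χ N).hasCompactSupport.mul_right
  choose B hB0 hB using hbound
  obtain ⟨δ, hδ, hs⟩ := exists_weights_summable (B := fun (i : ℕ × ℕ) k => B i.1 k i.2)
    fun i k => hB0 i.1 k i.2
  have hlocal : ∀ ξ : X, ∃ N, ∀ᶠ η in 𝓝 ξ, ∀ k, F k η = H N k η := fun ξ => by
    obtain ⟨N, hN⟩ := exists_nat_gt ‖ξ‖
    refine ⟨N, ?_⟩
    filter_upwards [continuous_norm.continuousAt.eventually
      (Iio_mem_nhds (hN.trans (lt_add_one (N : ℝ))))] with η hη k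
    simp [H, (χ N).one_of_mem_closedBall (mem_closedBall_zero_iff.2 (le_of_lt hη))]
  have hδ0 : ∀ k, 0 ≤ δ k := fun k => (hδ k).1.le
  refine ⟨δ, hδ, contDiff_iff_contDiffAt.2 fun ξ => ?_, fun ξ w => ?_⟩ <;>
    obtain ⟨N, hN⟩ := hlocal ξ <;>
    have hsum_eq : (fun η => ∑' k, δ k * F k η) =ᶠ[𝓝 ξ] fun η => ∑' k, δ k * H N k η :=
      hN.mono fun η hη => by simp only [hη]
  · exact (contDiff_tsum_const_mul hδ0 (hH N) (fun j k => hB N k j)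
      fun j => hs (N, j)).contDiffAt.congr_of_eventuallyEq hsum_eq
  · have hderiv_eq : ∀ k, fderiv ℝ (F k) ξ = fderiv ℝ (H N k) ξ := fun k =>
      EventuallyEq.fderiv_eq (hN.mono fun η hη => hη k)
    simp only [hderiv_eq, hsum_eq.fderiv_eq]
    exact hasSum_fderiv_tsum_const_mul hδ0 (hH N) (fun j k => hB N k j) (fun j => hs (N, j)) ξ w

end WeightedSeries

/-! ### Comparison functions -/

namespace IsClassK

variable {α γ : ℝ → ℝ}

theorem nonneg (h : IsClassK α) {s : ℝ} (hs : 0 ≤ s) : 0 ≤ α s :=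
  h.2.2.symm.trans_le (h.2.1.monotoneOn self_mem_Ici hs hs)

theorem mono (h : IsClassK α) {s t : ℝ} (hs : 0 ≤ s) (hst : s ≤ t) : α s ≤ α t :=
  h.2.1.monotoneOn hs (hs.trans hst) hst

theorem comp (hα : IsClassK α) (hγ : IsClassK γ) : IsClassK fun s => α (γ s) := by
  have hmaps : MapsTo γ (Ici 0) (Ici 0) := fun s hs => hγ.nonneg hs
  exact ⟨hα.1.comp hγ.1 hmaps, hα.2.1.comp hγ.2.1 hmaps, by simp only [hγ.2.2, hα.2.2]⟩

theorem add_classKInfty (hα : IsClassK α) (hγ : IsClassKInfty γ) :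
    IsClassKInfty fun s => α s + γ s := by
  refine ⟨⟨hα.1.add hγ.1.1, hα.2.1.add hγ.1.2.1, by simp only [hα.2.2, hγ.1.2.2, add_zero]⟩,
    tendsto_atTop_mono' _ ?_ hγ.2⟩
  filter_upwards [eventually_ge_atTop 0] with s hs
  exact le_add_of_nonneg_left (hα.nonneg hs)

theorem exists_forall_le_of_le_apply (hα : IsClassK α) {a : ℝ} (ha : 0 < a) :
    ∃ δ, 0 < δ ∧ ∀ s, 0 ≤ s → a ≤ α s → δ ≤ s := by
  have hlt : ∀ᶠ s in 𝓝[≥] (0 : ℝ), α s < a :=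
    (hα.1 0 self_mem_Ici).eventually (Iio_mem_nhds (by rwa [hα.2.2]))
  obtain ⟨δ, hδ, hδa⟩ := mem_nhdsGE_iff_exists_Ico_subset.1 hlt
  exact ⟨δ, hδ, fun s hs has => le_of_not_gt fun hsδ => (hδa ⟨hs, hsδ⟩).not_ge has⟩

end IsClassK

namespace IsClassKInfty

variable {α γ : ℝ → ℝ}

theorem comp (hα : IsClassKInfty α) (hγ : IsClassKInfty γ) : IsClassKInfty fun s => α (γ s) :=
  ⟨hα.1.comp hγ.1, hα.2.comp hγ.2⟩

theorem const_mul (hα : IsClassKInfty α) {C : ℝ} (hC : 0 < C) : IsClassKInfty fun s => C * α s :=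
  ⟨⟨continuousOn_const.mul hα.1.1,
    fun _ hs _ ht hst => mul_lt_mul_of_pos_left (hα.1.2.1 hs ht hst) hC,
    by simp only [hα.1.2.2, mul_zero]⟩, hα.2.const_mul_atTop hC⟩

theorem exists_forall_le_of_apply_le (hα : IsClassKInfty α) (b : ℝ) :
    ∃ r, ∀ s, α s ≤ b → s ≤ r := by
  obtain ⟨r, hr, hr0⟩ := ((hα.2.eventually_gt_atTop b).and (eventually_ge_atTop 0)).exists
  exact ⟨r, fun s hs => le_of_not_gt fun hrs => (hα.1.mono hr0 hrs.le).not_gt (hs.trans_lt hr)⟩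

end IsClassKInfty

theorem isClassKInfty_id : IsClassKInfty fun s => s :=
  ⟨⟨continuousOn_id, strictMonoOn_id, rfl⟩, tendsto_id⟩

theorem isClassK_div_one_add : IsClassK fun s => s / (1 + s) := by
  refine ⟨continuousOn_id.div (continuousOn_const.add continuousOn_id) fun s hs => ?_,
    fun s hs t ht hst => ?_, by simp⟩
  · rw [mem_Ici] at hs
    change 1 + s ≠ 0
    positivity
  · rw [mem_Ici] at hs ht
    rw [div_lt_div_iff₀ (by positivity) (by positivity)]
    linarith [mul_comm s t]

/-- The piecewise linear convex function `s ↦ ∑ₖ wₖ (s - cₖ)⁺`. It serves to assemble class `K∞`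
functions from countably many threshold estimates. -/
def hingeSeries (w c : ℕ → ℝ) (s : ℝ) : ℝ :=
  ∑' k, w k * max (s - c k) 0

section HingeSeries

variable {w c : ℕ → ℝ}

theorem summable_hinge (hw : ∀ k, 0 ≤ w k) (hs : Summable w) (hc : ∀ k, 0 ≤ c k) (s : ℝ) :
    Summable fun k => w k * max (s - c k) 0 := by
  refine Summable.of_norm_bounded (hs.mul_right (max s 0)) fun k => ?_
  rw [Real.norm_of_nonneg (mul_nonneg (hw k) (le_max_right _ _))]
  have := hw k
  gcongr
  linarith [hc k]

theorem hingeSeries_le_hingeSeries {w' : ℕ → ℝ} (hw : ∀ k, 0 ≤ w k) (hww' : ∀ k, w k ≤ w' k)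
    (hs' : Summable w') (hc : ∀ k, 0 ≤ c k) (s : ℝ) : hingeSeries w c s ≤ hingeSeries w' c s :=
  Summable.tsum_le_tsum (fun k => mul_le_mul_of_nonneg_right (hww' k) (le_max_right _ _))
    (summable_hinge hw (Summable.of_nonneg_of_le hw hww' hs') hc s)
    (summable_hinge (fun k => (hw k).trans (hww' k)) hs' hc s)

theorem continuous_hingeSeries (hw : ∀ k, 0 ≤ w k) (hs : Summable w) (hc : ∀ k, 0 ≤ c k) :
    Continuous (hingeSeries w c) := by
  refine (LipschitzWith.of_dist_le_mul (K := ⟨∑' k, w k, tsum_nonneg hw⟩)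
    fun s t => ?_).continuous
  have hsum := summable_hinge hw hs hc
  rw [dist_eq_norm, hingeSeries, hingeSeries, ← (hsum s).tsum_sub (hsum t)]
  refine tsum_of_norm_bounded (hs.hasSum.mul_right (dist s t)) fun k => ?_
  rw [← mul_sub, norm_mul, Real.norm_of_nonneg (hw k), Real.norm_eq_abs]
  refine mul_le_mul_of_nonneg_left ?_ (hw k)
  simpa [Real.dist_eq] using abs_max_sub_max_le_abs (s - c k) (t - c k) 0

theorem strictMonoOn_hingeSeries (hw : ∀ k, 0 < w k) (hs : Summable w) (hc : ∀ k, 0 ≤ c k)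
    (hc0 : Tendsto c atTop (𝓝 0)) : StrictMonoOn (hingeSeries w c) (Ici 0) := by
  intro s hs0 t _ hst
  obtain ⟨j, hj⟩ := (hc0.eventually (Iio_mem_nhds (lt_of_le_of_lt hs0 hst))).exists
  have hsum := summable_hinge (fun k => (hw k).le) hs hc
  refine Summable.tsum_lt_tsum (i := j) (fun k => ?_) ?_ (hsum s) (hsum t)
  · exact mul_le_mul_of_nonneg_left (max_le_max_right _ (by linarith)) (hw k).le
  · refine mul_lt_mul_of_pos_left ?_ (hw j)
    exact lt_max_of_lt_left (max_lt (by linarith) (sub_pos.2 hj))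

theorem isClassKInfty_hingeSeries (hw : ∀ k, 0 < w k) (hs : Summable w) (hc : ∀ k, 0 ≤ c k)
    (hc0 : Tendsto c atTop (𝓝 0)) : IsClassKInfty (hingeSeries w c) := by
  have hw0 : ∀ k, 0 ≤ w k := fun k => (hw k).le
  refine ⟨⟨(continuous_hingeSeries hw0 hs hc).continuousOn, strictMonoOn_hingeSeries hw hs hc hc0,
    by simp [hingeSeries, hc]⟩, ?_⟩
  have hle : ∀ s, w 0 * (s + -c 0) ≤ hingeSeries w c s := fun s =>
    (mul_le_mul_of_nonneg_left (le_max_left _ _) (hw0 0)).trans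
      ((summable_hinge hw0 hs hc s).le_tsum 0
        fun k _ => mul_nonneg (hw0 k) (le_max_right _ _))
  exact tendsto_atTop_mono hle
    ((tendsto_atTop_add_const_right _ _ tendsto_id).const_mul_atTop (hw 0))

end HingeSeries

theorem exists_classKInfty_norm_le {X Y : Type*} [NormedAddCommGroup X] [NormedSpace ℝ X]
    [ProperSpace X] [NormedAddCommGroup Y] {h : X → Y} (hh : Continuous h) (h0 : h 0 = 0) :
    ∃ α : ℝ → ℝ, IsClassKInfty α ∧ ∀ ξ, ‖h ξ‖ ≤ α ‖ξ‖ := by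
  have hball : IsCompact (Metric.closedBall (0 : X) 1) := isCompact_closedBall 0 1
  let S : ℝ → Set ℝ := fun s => (fun ξ => ‖h (s • ξ)‖) '' Metric.closedBall (0 : X) 1
  have hbdd : ∀ s, BddAbove (S s) := fun s => (hball.image (by fun_prop)).bddAbove
  have hmono : MonotoneOn (fun s => sSup (S s)) (Ici 0) := by
    intro s hs t _ hst
    rcases hst.eq_or_lt with rfl | hlt
    · exact le_rfl
    have ht : 0 < t := lt_of_le_of_lt hs hlt
    refine csSup_le_csSup (hbdd t) (Metric.nonempty_closedBall.2 zero_le_one |>.image _) ?_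
    rintro _ ⟨ξ, hξ, rfl⟩
    refine ⟨(s / t) • ξ, ?_, by simp only [smul_smul, mul_div_cancel₀ s ht.ne']⟩
    rw [mem_closedBall_zero_iff, norm_smul, Real.norm_of_nonneg (div_nonneg hs ht.le)]
    exact mul_le_one₀ ((div_le_one ht).2 hst) (norm_nonneg ξ) (mem_closedBall_zero_iff.1 hξ)
  have hcont : Continuous fun s => sSup (S s) :=
    hball.continuous_sSup (f := fun (s : ℝ) (ξ : X) => ‖h (s • ξ)‖) (by fun_prop)
  have hzero : S 0 = {0} := by
    simp [S, h0, Metric.nonempty_closedBall.2 zero_le_one]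
  have hnonneg : ∀ s ∈ Ici (0 : ℝ), 0 ≤ sSup (S s) := fun s hs => by
    simpa [hzero] using hmono self_mem_Ici hs hs
  refine ⟨fun s => sSup (S s) + s, ⟨⟨(hcont.add continuous_id).continuousOn,
    hmono.add_strictMono strictMonoOn_id, by simp [hzero]⟩, ?_⟩, fun ξ => ?_⟩
  · refine tendsto_atTop_mono' _ ?_ tendsto_id
    filter_upwards [eventually_ge_atTop 0] with s hs
    exact le_add_of_nonneg_left (hnonneg s hs)
  · refine (le_csSup (hbdd ‖ξ‖) ⟨‖ξ‖⁻¹ • ξ, ?_, ?_⟩).trans (le_add_of_nonneg_right (norm_nonneg ξ))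
    · simpa [norm_smul] using inv_mul_le_one
    · rcases eq_or_ne ξ 0 with rfl | hξ
      · simp
      · simp [smul_smul, hξ]

namespace IsClassKL

variable {β : ℝ → ℝ → ℝ}

theorem le_apply_zero (hβ : IsClassKL β) {s t : ℝ} (hs : 0 ≤ s) (ht : 0 ≤ t) : β s t ≤ β s 0 :=
  (hβ.2 s hs).1 self_mem_Ici ht ht

theorem exists_forall_le (hβ : IsClassKL β) {a : ℝ} (ha : 0 < a) (b : ℝ) :
    ∃ T, 0 < T ∧ ∀ r t, 0 ≤ r → r ≤ b → T ≤ t → β r t ≤ a := by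
  obtain ⟨T, hT⟩ := eventually_atTop.1
    ((hβ.2 (max b 0) (le_max_right b 0)).2.eventually (Iic_mem_nhds ha))
  refine ⟨max T 1, lt_max_of_lt_right one_pos, fun r t hr hrb ht => ?_⟩
  have ht0 : 0 ≤ t := zero_le_one.trans ((le_max_right _ _).trans ht)
  exact ((hβ.1 t ht0).mono hr (hrb.trans (le_max_left _ _))).trans
    (hT t ((le_max_left _ _).trans ht))

theorem exists_continuous_settling (hβ : IsClassKL β) {a : ℝ} (ha : 0 < a) :
    ∃ τ : ℝ → ℝ, Continuous τ ∧ ∀ b, 0 < τ b ∧ τ b ≤ 1 ∧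
      ∀ r t, 0 ≤ r → r ≤ b → 1 / τ b ≤ t → β r t ≤ a := by
  obtain ⟨m, hm, hmβ⟩ := exists_antitone_choice
    (P := fun b c => ∀ r t, 0 ≤ r → r ≤ b → 1 / c ≤ t → β r t ≤ a)
    (fun hP hb hc' hc r t hr hrb ht =>
      hP r t hr (hrb.trans hb) ((one_div_le_one_div_of_le hc' hc).trans ht))
    (fun b => by
      obtain ⟨T, hT, hTβ⟩ := hβ.exists_forall_le ha b
      exact ⟨1 / T, one_div_pos.2 hT, fun r t hr hrb ht => hTβ r t hr hrb (by simpa using ht)⟩)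
  obtain ⟨τ, hτ, hτm⟩ := exists_contDiff_pos_le_of_antitone hm fun b => (hmβ b).1
  exact ⟨τ, hτ.continuous, fun b => ⟨(hτm b).1, (hτm b).2.trans (hmβ b).2.1,
    fun r t hr hrb ht => (hmβ b).2.2 r t hr hrb
      ((one_div_le_one_div_of_le (hτm b).1 (hτm b).2).trans ht)⟩⟩

end IsClassKL

/-! ### Decay rates -/

section Decay

variable {X U : Type*} [NormedAddCommGroup X] [NormedSpace ℝ X]

/-- The function `W` does not increase along the vector fields `f · μ`, `μ ∈ Ω`, and decreases at
a uniform positive rate where `W` is bounded away from `0` and the gauge `q` is bounded. -/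
structure DecaysOnBands (Ω : Set U) (f : X → U → X) (W q : X → ℝ) : Prop where
  fderiv_nonpos : ∀ ξ, ∀ μ ∈ Ω, fderiv ℝ W ξ (f ξ μ) ≤ 0
  exists_rate : ∀ a b, 0 < a → ∃ c, 0 < c ∧
    ∀ ξ, a ≤ W ξ → q ξ ≤ b → ∀ μ ∈ Ω, fderiv ℝ W ξ (f ξ μ) ≤ -c

theorem exists_contDiff_classKInfty_deriv_eq {θ : ℝ → ℝ} (hθ : ContDiff ℝ (⊤ : ℕ∞) θ)
    (hθ0 : ∀ v, 0 < θ v ∧ θ v ≤ 1) :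
    ∃ Ψ : ℝ → ℝ, ContDiff ℝ (⊤ : ℕ∞) Ψ ∧ IsClassKInfty Ψ ∧ ∀ v, deriv Ψ v = (θ v)⁻¹ := by
  have hinv : ContDiff ℝ (⊤ : ℕ∞) fun v => (θ v)⁻¹ := hθ.inv fun v => (hθ0 v).1.ne'
  have hΨ := contDiff_intervalIntegral_right hinv 0
  have hderiv := hinv.continuous.deriv_integral (fun v => (θ v)⁻¹) 0
  refine ⟨_, hΨ, ⟨⟨hΨ.continuous.continuousOn, ?_, by simp⟩, ?_⟩, hderiv⟩
  · refine (strictMono_of_deriv_pos fun v => ?_).strictMonoOn _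
    rw [hderiv]
    exact inv_pos.2 (hθ0 v).1
  · refine tendsto_atTop_mono' _ ?_ tendsto_id
    filter_upwards [eventually_ge_atTop 0] with v hv
    simpa using intervalIntegral.integral_mono_on (μ := volume) hv intervalIntegrable_const
      (hinv.continuous.intervalIntegrable 0 v) fun s _ => (one_le_inv₀ (hθ0 s).1).2 (hθ0 s).2

theorem fderiv_comp_apply {Ψ : ℝ → ℝ} {W : X → ℝ} {ξ : X} (hΨ : DifferentiableAt ℝ Ψ (W ξ))
    (hW : DifferentiableAt ℝ W ξ) (w : X) :
    fderiv ℝ (fun ξ => Ψ (W ξ)) ξ w = deriv Ψ (W ξ) * fderiv ℝ W ξ w := by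
  have h := hΨ.hasDerivAt.comp_hasFDerivAt ξ hW.hasFDerivAt
  rw [Function.comp_def] at h
  rw [h.fderiv, smul_apply, smul_eq_mul]

theorem mul_hinge_div_one_add_le {v c g D : ℝ} (hv : 0 ≤ v) (hc : 0 ≤ c) (hg : 0 ≤ g)
    (hD : D ≤ 0) (hcv : c ≤ v → D ≤ -g) : g * max (v / (1 + v) - c) 0 ≤ -D := by
  rcases le_or_gt c v with hle | hlt
  · have hle_one : v / (1 + v) ≤ 1 := (div_le_one (by linarith)).2 (by linarith)
    exact (mul_le_of_le_one_right hg (max_le (by linarith) zero_le_one)).trans (le_neg.2 (hcv hle))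
  · have hle_self : v / (1 + v) ≤ v := div_le_self hv (by linarith)
    rw [max_eq_right (by linarith), mul_zero]
    exact neg_nonneg.2 hD

namespace DecaysOnBands

variable {Ω : Set U} {f : X → U → X} {W q : X → ℝ}

theorem exists_classK_rate (hW : DecaysOnBands Ω f W q) (hW0 : ∀ ξ, 0 ≤ W ξ) :
    ∃ α : ℝ → ℝ → ℝ, (∀ b, IsClassK fun s => α s b) ∧ (∀ s, Antitone (α s)) ∧
      ∀ ξ, ∀ μ ∈ Ω, fderiv ℝ W ξ (f ξ μ) ≤ -α (W ξ) (q ξ) := by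
  have hknot : ∀ j : ℕ, 0 < 1 / ((j : ℝ) + 1) := fun j => by positivity
  have hchoice := fun j : ℕ => exists_antitone_choice
    (P := fun b c => ∀ ξ, 1 / ((j : ℝ) + 1) ≤ W ξ → q ξ ≤ b → ∀ μ ∈ Ω, fderiv ℝ W ξ (f ξ μ) ≤ -c)
    (fun hP hb _ hc ξ hWξ hqξ μ hμ =>
      (hP ξ hWξ (hqξ.trans hb) μ hμ).trans (neg_le_neg hc))
    fun b => hW.exists_rate _ b (hknot j)
  choose g hg_anti hg using hchoice
  let w : ℕ → ℝ := fun j => 1 / 2 / 2 ^ j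
  have hw0 : ∀ j, 0 < w j := fun j => by positivity
  have hw : HasSum w 1 := hasSum_geometric_two' 1
  have hwg0 : ∀ b j, 0 < w j * g j b := fun b j => mul_pos (hw0 j) (hg j b).1
  have hwg : ∀ b, Summable fun j => w j * g j b := fun b =>
    Summable.of_nonneg_of_le (fun j => (hwg0 b j).le)
      (fun j => mul_le_of_le_one_right (hw0 j).le (hg j b).2.1) hw.summable
  refine ⟨fun s b => hingeSeries (fun j => w j * g j b) (fun j => 1 / (j + 1)) (s / (1 + s)),
    fun b => (isClassKInfty_hingeSeries (hwg0 b) (hwg b) (fun j => (hknot j).le)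
      tendsto_one_div_add_atTop_nhds_zero_nat).1.comp isClassK_div_one_add,
    fun s b b' hb => hingeSeries_le_hingeSeries (fun j => (hwg0 b' j).le)
      (fun j => mul_le_mul_of_nonneg_left (hg_anti j hb) (hw0 j).le) (hwg b)
      (fun j => (hknot j).le) _, fun ξ μ hμ => ?_⟩
  have hterm : ∀ j : ℕ, w j * g j (q ξ) * max (W ξ / (1 + W ξ) - 1 / (j + 1)) 0 ≤
      w j * -fderiv ℝ W ξ (f ξ μ) := fun j => by
    rw [mul_assoc]
    exact mul_le_mul_of_nonneg_left (mul_hinge_div_one_add_le (hW0 ξ) (hknot j).le (hg j _).1.le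
      (hW.fderiv_nonpos ξ μ hμ) fun hj => (hg j _).2.2 ξ hj le_rfl μ hμ) (hw0 j).le
  have hsum := summable_hinge (fun j => (hwg0 (q ξ) j).le) (hwg (q ξ)) (fun j => (hknot j).le)
    (W ξ / (1 + W ξ))
  exact le_neg.1 ((hasSum_le hterm hsum.hasSum (hw.mul_right _)).trans_eq (one_mul _))

theorem of_classKInfty_le (hW : DecaysOnBands Ω f W q) {Φ : ℝ → ℝ} (hΦ : IsClassKInfty Φ)
    (hle : ∀ ξ, Φ (q ξ) ≤ W ξ) : DecaysOnBands Ω f W W where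
  fderiv_nonpos := hW.fderiv_nonpos
  exists_rate a b ha := by
    obtain ⟨r, hr⟩ := hΦ.exists_forall_le_of_apply_le b
    obtain ⟨c, hc, hcW⟩ := hW.exists_rate a r ha
    exact ⟨c, hc, fun ξ haξ hξb => hcW ξ haξ (hr _ ((hle ξ).trans hξb))⟩

-- With `Ψ' = 1 / θ`, where `θ (W ξ)` is below the rate at `ξ`, the rate of `Ψ ∘ W` is at least `1`.
theorem exists_rescaling (hW : DecaysOnBands Ω f W W) (hWd : Differentiable ℝ W)
    (hW0 : ∀ ξ, 0 ≤ W ξ) :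
    ∃ Ψ : ℝ → ℝ, ContDiff ℝ (⊤ : ℕ∞) Ψ ∧ IsClassKInfty Ψ ∧
      DecaysOnBands Ω f (fun ξ => Ψ (W ξ)) fun _ => 0 := by
  obtain ⟨k, hk, hkW⟩ := exists_antitone_choice
    (P := fun b c => ∀ ξ, 1 ≤ W ξ → W ξ ≤ b → ∀ μ ∈ Ω, fderiv ℝ W ξ (f ξ μ) ≤ -c)
    (fun hP hb _ hc ξ h1 hξ μ hμ => (hP ξ h1 (hξ.trans hb) μ hμ).trans (neg_le_neg hc))
    (fun b => hW.exists_rate 1 b one_pos)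
  obtain ⟨θ, hθ, hθk⟩ := exists_contDiff_pos_le_of_antitone hk fun b => (hkW b).1
  have hθ1 : ∀ v, 0 < θ v ∧ θ v ≤ 1 := fun v => ⟨(hθk v).1, (hθk v).2.trans (hkW v).2.1⟩
  obtain ⟨Ψ, hΨ, hΨK, hΨd⟩ := exists_contDiff_classKInfty_deriv_eq hθ hθ1
  have hfderiv : ∀ ξ w, fderiv ℝ (fun ξ => Ψ (W ξ)) ξ w = (θ (W ξ))⁻¹ * fderiv ℝ W ξ w :=
    fun ξ w => by rw [fderiv_comp_apply (hΨ.differentiable (by simp) _) (hWd ξ), hΨd]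
  refine ⟨Ψ, hΨ, hΨK, fun ξ μ hμ => ?_, fun a _ ha => ?_⟩
  · rw [hfderiv]
    exact mul_nonpos_of_nonneg_of_nonpos (inv_pos.2 (hθ1 _).1).le (hW.fderiv_nonpos ξ μ hμ)
  obtain ⟨δ, hδ, hδΨ⟩ := hΨK.1.exists_forall_le_of_le_apply ha
  obtain ⟨c, hc, hcW⟩ := hW.exists_rate δ 1 hδ
  refine ⟨min 1 c, lt_min one_pos hc, fun ξ hξ _ μ hμ => ?_⟩
  rw [hfderiv, le_neg, ← mul_neg]
  rcases le_total 1 (W ξ) with h1 | h1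
  · have hrate := (hkW (W ξ)).2.2 ξ h1 le_rfl μ hμ
    calc min 1 c ≤ (θ (W ξ))⁻¹ * θ (W ξ) := by
          rw [inv_mul_cancel₀ (hθ1 _).1.ne']
          exact min_le_left _ _
      _ ≤ (θ (W ξ))⁻¹ * -fderiv ℝ W ξ (f ξ μ) :=
          mul_le_mul_of_nonneg_left (by linarith [(hθk (W ξ)).2]) (inv_pos.2 (hθ1 _).1).le
  · have hrate := hcW ξ (hδΨ _ (hW0 ξ) hξ) h1 μ hμ
    calc min 1 c ≤ -fderiv ℝ W ξ (f ξ μ) := (min_le_right _ _).trans (by linarith)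
      _ ≤ (θ (W ξ))⁻¹ * -fderiv ℝ W ξ (f ξ μ) :=
          le_mul_of_one_le_left (by linarith) ((one_le_inv₀ (hθ1 _).1).2 (hθ1 _).2)

end DecaysOnBands

end Decay

/-! ### Mollification with variable radius -/

theorem fderiv_le_of_eventually_le {X : Type*} [NormedAddCommGroup X] [NormedSpace ℝ X]
    {F : X → ℝ} {ξ w : X} {c : ℝ} (hF : DifferentiableAt ℝ F ξ)
    (h : ∀ᶠ t : ℝ in 𝓝[>] 0, F (ξ + t • w) ≤ F ξ - c * t) : fderiv ℝ F ξ w ≤ -c := by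
  refine le_of_tendsto (hF.hasFDerivAt.hasLineDerivAt w).tendsto_slope_zero_right ?_
  filter_upwards [h, self_mem_nhdsWithin] with t ht (ht0 : 0 < t)
  rw [smul_eq_mul, inv_mul_le_iff₀ ht0]
  linarith

theorem exists_forall_norm_sub_lt_of_isCompact {X U Y : Type*} [NormedAddCommGroup X]
    [ProperSpace X] [PseudoMetricSpace U] [NormedAddCommGroup Y] {Ω : Set U} (hΩ : IsCompact Ω)
    {g : X → U → Y} (hg : Continuous fun p : X × U => g p.1 p.2) (R : ℝ) {ε : ℝ} (hε : 0 < ε) :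
    ∃ δ, 0 < δ ∧
      ∀ ξ, ‖ξ‖ ≤ R → ∀ u, ‖u‖ ≤ δ → ∀ μ ∈ Ω, ‖g ξ μ - g (ξ + u) μ‖ < ε := by
  have hK : IsCompact (Metric.closedBall (0 : X) R ×ˢ Ω) := (isCompact_closedBall _ _).prod hΩ
  obtain ⟨δ, hδ, h⟩ := Metric.mem_uniformity_dist.1
    (hK.uniformContinuousAt_of_continuousAt _ (fun p _ => hg.continuousAt)
      (Metric.dist_mem_uniformity hε))
  refine ⟨δ / 2, half_pos hδ, fun ξ hξ u hu μ hμ => ?_⟩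
  have hdist : dist (ξ, μ) (ξ + u, μ) < δ := by
    simpa [Prod.dist_eq, hδ] using hu.trans_lt (half_lt_self hδ)
  rw [← dist_eq_norm]
  exact h hdist ⟨mem_closedBall_zero_iff.2 hξ, hμ⟩

section Mollification

variable {X : Type*} [NormedAddCommGroup X] [InnerProductSpace ℝ X] [FiniteDimensional ℝ X]
  [MeasurableSpace X] [BorelSpace X]

/-- A fixed smooth probability density on `X` supported in the closed unit ball. -/
def unitKernel (X : Type*) [NormedAddCommGroup X] [InnerProductSpace ℝ X]
    [FiniteDimensional ℝ X] [MeasurableSpace X] [BorelSpace X] : X → ℝ :=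
  (⟨1 / 2, 1, by norm_num, by norm_num⟩ : ContDiffBump (0 : X)).normed volume

theorem contDiff_unitKernel : ContDiff ℝ (⊤ : ℕ∞) (unitKernel X) :=
  ContDiffBump.contDiff_normed _

theorem unitKernel_nonneg (z : X) : 0 ≤ unitKernel X z :=
  ContDiffBump.nonneg_normed _ z

theorem integral_unitKernel : ∫ z, unitKernel X z = 1 :=
  ContDiffBump.integral_normed _

theorem unitKernel_eq_zero {z : X} (hz : 1 < ‖z‖) : unitKernel X z = 0 := by
  rw [← Function.notMem_support, unitKernel, ContDiffBump.support_normed_eq,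
    mem_ball_zero_iff, not_lt]
  exact hz.le

theorem integrable_mul_unitKernel {A : X → ℝ} (hA : Continuous A) :
    Integrable fun z => A z * unitKernel X z :=
  (hA.mul contDiff_unitKernel.continuous).integrable_of_hasCompactSupport
    (ContDiffBump.hasCompactSupport_normed _).mul_left

theorem integral_mul_unitKernel_le {A B : X → ℝ} (hA : Continuous A) (hB : Continuous B) {c : ℝ}
    (h : ∀ z, ‖z‖ ≤ 1 → A z ≤ B z + c) :
    ∫ z, A z * unitKernel X z ≤ (∫ z, B z * unitKernel X z) + c :=
  calc ∫ z, A z * unitKernel X z ≤ ∫ z, (B z * unitKernel X z + c * unitKernel X z) := by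
        refine integral_mono (integrable_mul_unitKernel hA)
          ((integrable_mul_unitKernel hB).add (integrable_mul_unitKernel continuous_const))
          fun z => ?_
        rcases le_or_gt ‖z‖ 1 with hz | hz
        · rw [← add_mul]
          exact mul_le_mul_of_nonneg_right (h z hz) (unitKernel_nonneg z)
        · simp only [unitKernel_eq_zero hz, mul_zero, add_zero, le_refl]
    _ = (∫ z, B z * unitKernel X z) + c := by
        rw [integral_add (integrable_mul_unitKernel hB)
          (integrable_mul_unitKernel continuous_const), integral_const_mul, integral_unitKernel,
          mul_one]

/-- The average of `G` over the ball of radius `r ξ` around `ξ`, weighted by the rescaled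
`unitKernel`: a mollification whose radius may depend on the point. -/
def mollify (r G : X → ℝ) (ξ : X) : ℝ :=
  ∫ z, G (ξ - r ξ • z) * unitKernel X z

theorem mollify_le_mollify_add {r G : X → ℝ} (hG : Continuous G) {ξ η : X} {c : ℝ}
    (h : ∀ z, ‖z‖ ≤ 1 → G (ξ - r ξ • z) ≤ G (η - r η • z) + c) :
    mollify r G ξ ≤ mollify r G η + c :=
  integral_mul_unitKernel_le (by fun_prop) (by fun_prop) h

theorem mollify_le {r G : X → ℝ} (hG : Continuous G) {ξ : X} {c : ℝ}
    (h : ∀ z, ‖z‖ ≤ 1 → G (ξ - r ξ • z) ≤ c) : mollify r G ξ ≤ c := by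
  simpa [mollify] using integral_mul_unitKernel_le (A := fun z => G (ξ - r ξ • z))
    (B := fun _ => 0) (by fun_prop) continuous_const (by simpa using h)

theorem le_mollify {r G : X → ℝ} (hG : Continuous G) {ξ : X} {c : ℝ}
    (h : ∀ z, ‖z‖ ≤ 1 → c ≤ G (ξ - r ξ • z)) : c ≤ mollify r G ξ := by
  simpa [mollify, integral_const_mul, integral_unitKernel] using
    integral_mul_unitKernel_le (A := fun _ => c) (B := fun z => G (ξ - r ξ • z)) (c := 0)
      continuous_const (by fun_prop) (by simpa using h)

theorem mollify_eq_integral {r G : X → ℝ} {ξ : X} (hr : 0 < r ξ) :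
    mollify r G ξ =
      ∫ w, G (ξ - w) * ((r ξ ^ Module.finrank ℝ X)⁻¹ * unitKernel X ((r ξ)⁻¹ • w)) := by
  have h := Measure.integral_comp_inv_smul_of_nonneg (volume : Measure X)
    (fun z => G (ξ - r ξ • z) * unitKernel X z) hr.le
  rw [smul_eq_mul, ← inv_mul_eq_iff_eq_mul₀ (pow_pos hr _).ne', ← integral_const_mul] at h
  rw [mollify, ← h]
  simp only [smul_inv_smul₀ hr.ne', mul_left_comm]

theorem contDiff_mollify {r G : X → ℝ} (hr : ContDiff ℝ (⊤ : ℕ∞) r)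
    (hr0 : ∀ ξ, 0 < r ξ ∧ r ξ ≤ 1) (hG : Continuous G) :
    ContDiff ℝ (⊤ : ℕ∞) (mollify r G) := by
  let k : X → X → ℝ := fun ξ w => (r ξ ^ Module.finrank ℝ X)⁻¹ * unitKernel X ((r ξ)⁻¹ • w)
  have hk : ContDiff ℝ (⊤ : ℕ∞) (Function.uncurry k) := by
    have hr' : ContDiff ℝ (⊤ : ℕ∞) fun p : X × X => r p.1 := hr.comp contDiff_fst
    exact ((hr'.pow _).inv fun p => (pow_pos (hr0 _).1 _).ne').mul
      (contDiff_unitKernel.comp ((hr'.inv fun p => (hr0 _).1.ne').smul contDiff_snd))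
  have hk0 : ∀ ξ w, w ∉ Metric.closedBall (0 : X) 1 → k ξ w = 0 := fun ξ w hw => by
    rw [mem_closedBall_zero_iff, not_le] at hw
    refine mul_eq_zero_of_right _ (unitKernel_eq_zero ?_)
    rw [norm_smul, norm_inv, Real.norm_of_nonneg (hr0 ξ).1.le, inv_mul_eq_div,
      one_lt_div (hr0 ξ).1]
    exact (hr0 ξ).2.trans_lt hw
  have hconv := contDiffOn_convolution_right_with_param_comp (𝕜 := ℝ) (n := ⊤) (μ := volume)
    (ContinuousLinearMap.mul ℝ ℝ) (v := id) contDiffOn_id isOpen_univ (isCompact_closedBall 0 1)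
    (fun ξ w _ hw => hk0 ξ w hw) hG.locallyIntegrable hk.contDiffOn
  rw [contDiffOn_univ] at hconv
  convert hconv using 1
  funext ξ
  rw [convolution_eq_swap, mollify_eq_integral (hr0 ξ).1]
  simp only [k, id, ContinuousLinearMap.mul_apply']

end Mollification

/-! ### Smoothing a robustly decaying function -/

/-- Above the level `a`, the continuous function `V` decreases at rate `ρ` along every direction
close to the vector field, for short times: the substitute for a differential inequality that
survives averaging over nearby points. -/
def RobustDecay {X U : Type*} [NormedAddCommGroup X] [NormedSpace ℝ X] (Ω : Set U)
    (f : X → U → X) (V : X → ℝ) (a : ℝ) (ρ : X → ℝ) : Prop :=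
  ∀ R : ℝ, ∃ ε : ℝ, 0 < ε ∧ ∀ ξ, ‖ξ‖ ≤ R → a ≤ V ξ → ∀ μ ∈ Ω, ∀ v, ‖v - f ξ μ‖ ≤ ε →
    ∀ t ∈ Icc 0 ε, V (ξ + t • v) ≤ V ξ - ρ ξ * t

/-- Displacing `ξ` by at most `c` changes `V` by at most `a / 8`, and the displaced point inherits
robust decay along `f ξ μ` at half the rate; `c * (1 + ‖f ξ μ‖)` bounds the error in the direction
caused by a mollification radius whose value and gradient are at most `c`. -/
def IsMollificationRadius {X U : Type*} [NormedAddCommGroup X] [NormedSpace ℝ X] (Ω : Set U)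
    (f : X → U → X) (V : X → ℝ) (a : ℝ) (ρ : X → ℝ) (ξ : X) (c : ℝ) : Prop :=
  ∀ u, ‖u‖ ≤ c → |V ξ - V (ξ + u)| ≤ a / 8 ∧
    ∀ μ ∈ Ω, a / 2 ≤ V (ξ + u) → ∀ v, ‖v - f ξ μ‖ ≤ c * (1 + ‖f ξ μ‖) →
      ∀ t ∈ Icc 0 c, V (ξ + u + t • v) ≤ V (ξ + u) - ρ ξ / 2 * t

section

variable {X U : Type*} [NormedAddCommGroup X] {Ω : Set U} {f : X → U → X} {V ρ : X → ℝ} {a : ℝ}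

theorem IsMollificationRadius.mono [NormedSpace ℝ X] {ξ : X} {c c' : ℝ}
    (h : IsMollificationRadius Ω f V a ρ ξ c) (hc : c' ≤ c) :
    IsMollificationRadius Ω f V a ρ ξ c' := fun u hu =>
  ⟨(h u (hu.trans hc)).1, fun μ hμ hV v hv t ht => (h u (hu.trans hc)).2 μ hμ hV v
    (hv.trans (mul_le_mul_of_nonneg_right hc (by positivity))) t ⟨ht.1, ht.2.trans hc⟩⟩

theorem exists_pos_forall_le_of_continuous [ProperSpace X] (hρ : Continuous ρ)
    (hρ0 : ∀ ξ, 0 < ρ ξ) (R : ℝ) : ∃ c, 0 < c ∧ ∀ ξ, ‖ξ‖ ≤ R → c ≤ ρ ξ := by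
  obtain ⟨c, hc, hle⟩ := (isCompact_closedBall (0 : X) R).exists_forall_le' hρ.continuousOn
    fun ξ _ => hρ0 ξ
  exact ⟨c, hc, fun ξ hξ => hle ξ (mem_closedBall_zero_iff.2 hξ)⟩

theorem RobustDecay.exists_isMollificationRadius [NormedSpace ℝ X] [ProperSpace X]
    [PseudoMetricSpace U] (hΩ : IsCompact Ω) (hf : Continuous fun p : X × U => f p.1 p.2)
    (hV : Continuous V) (hρ : Continuous ρ) (hρ0 : ∀ ξ, 0 < ρ ξ) (ha : 0 < a)
    (hdec : RobustDecay Ω f V (a / 2) ρ) (R : ℝ) :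
    ∃ c, 0 < c ∧ ∀ ξ, ‖ξ‖ ≤ R → IsMollificationRadius Ω f V a ρ ξ c := by
  obtain ⟨ε, hε, hdecR⟩ := hdec (R + 1)
  obtain ⟨ρ₀, hρ₀, hρR⟩ := exists_pos_forall_le_of_continuous hρ hρ0 R
  obtain ⟨δV, hδV, hVR⟩ := exists_forall_norm_sub_lt_of_isCompact isCompact_univ
    (g := fun ξ (_ : Unit) => V ξ) (by fun_prop) R (show 0 < a / 8 by positivity)
  obtain ⟨δρ, hδρ, hρδ⟩ := exists_forall_norm_sub_lt_of_isCompact isCompact_univ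
    (g := fun ξ (_ : Unit) => ρ ξ) (by fun_prop) R (half_pos hρ₀)
  obtain ⟨δf, hδf, hfR⟩ := exists_forall_norm_sub_lt_of_isCompact hΩ hf R (half_pos hε)
  obtain ⟨B, hB⟩ := ((isCompact_closedBall (0 : X) R).prod hΩ).exists_bound_of_continuousOn
    hf.continuousOn
  have hB0 : 0 < 1 + max B 0 := by positivity
  obtain ⟨c, hc0, hc⟩ : ∃ c, 0 < c ∧
      c ≤ min (min (min δV δρ) (min δf 1)) (min ε (ε / 2 / (1 + max B 0))) :=
    ⟨_, by positivity, le_rfl⟩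
  simp only [le_min_iff] at hc
  obtain ⟨⟨⟨hcV, hcρ⟩, hcf, hc1⟩, hcε, hcB⟩ := hc
  rw [le_div_iff₀ hB0] at hcB
  refine ⟨c, hc0, fun ξ hξ u hu => ⟨(hVR ξ hξ u (hu.trans hcV) () trivial).le,
    fun μ hμ hVu v hv t ht => ?_⟩⟩
  have hv' : ‖v - f (ξ + u) μ‖ ≤ ε :=
    calc ‖v - f (ξ + u) μ‖ ≤ ‖v - f ξ μ‖ + ‖f ξ μ - f (ξ + u) μ‖ :=
          norm_sub_le_norm_sub_add_norm_sub ..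
      _ ≤ c * (1 + max B 0) + ε / 2 := by
          have hfB : ‖f ξ μ‖ ≤ max B 0 :=
            (hB (ξ, μ) ⟨mem_closedBall_zero_iff.2 hξ, hμ⟩).trans (le_max_left _ _)
          exact add_le_add (hv.trans (by gcongr)) (hfR ξ hξ u (hu.trans hcf) μ hμ).le
      _ ≤ ε := by linarith
  have hrate : ρ ξ / 2 ≤ ρ (ξ + u) := by
    have hlt := hρδ ξ hξ u (hu.trans hcρ) () trivial
    rw [Real.norm_eq_abs, abs_lt] at hlt
    linarith [hρR ξ hξ]
  have hstep := hdecR (ξ + u) ((norm_add_le ξ u).trans (add_le_add hξ (hu.trans hc1))) hVu μ hμ v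
    hv' t ⟨ht.1, ht.2.trans hcε⟩
  exact hstep.trans (sub_le_sub_left (mul_le_mul_of_nonneg_right hrate ht.1) _)

theorem tendsto_add_smul_nhdsGT_zero [NormedSpace ℝ X] (ξ w : X) :
    Tendsto (fun t : ℝ => ξ + t • w) (𝓝[>] 0) (𝓝 ξ) := by
  have h : Tendsto (fun t : ℝ => ξ + t • w) (𝓝 0) (𝓝 (ξ + (0 : ℝ) • w)) :=
    Continuous.tendsto (by fun_prop) 0
  rw [zero_smul, add_zero] at h
  exact h.mono_left nhdsWithin_le_nhds

theorem eventually_abs_sub_lt_mul [NormedSpace ℝ X] {r : X → ℝ} {ξ w : X} {B : ℝ}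
    (hr : DifferentiableAt ℝ r ξ) (hB : |fderiv ℝ r ξ w| < B) :
    ∀ᶠ t : ℝ in 𝓝[>] 0, |t⁻¹ * (r (ξ + t • w) - r ξ)| < B :=
  ((hr.hasFDerivAt.hasLineDerivAt w).tendsto_slope_zero_right).abs.eventually
    (Iio_mem_nhds hB)

theorem truncation_le {c t v v' s e : ℝ} (hs : |v - s| ≤ a / 8) (he : |v' - e| ≤ a / 8)
    (hv : v' < v + a / 8) (ht : c * t < a) (hdec : a / 2 ≤ s → e ≤ s - c * t)
    (hc : c = 0 ∨ 3 * a ≤ v) : max (e - a) 0 ≤ max (s - a) 0 + -(c * t) := by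
  rw [abs_le] at hs he
  rcases lt_or_ge s (a / 2) with hlow | hhigh
  · obtain rfl : c = 0 := hc.resolve_right (by linarith)
    rw [zero_mul, neg_zero, add_zero]
    exact max_le (le_max_of_le_right (by linarith)) (le_max_right _ _)
  · have hdec' := hdec hhigh
    rcases hc with rfl | h3a
    · rw [zero_mul] at *
      rw [neg_zero, add_zero]
      exact max_le_max_right _ (by linarith)
    · rw [max_eq_left (show 0 ≤ s - a by linarith)]
      exact max_le (by linarith) (by linarith)

-- Moving `ξ` along `w` moves `ξ - r ξ • z` along `w - κ • z`, where `κ` is the slope of `r`.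
theorem eventually_truncation_le [NormedSpace ℝ X] {r : X → ℝ} {δ : X → ℝ} (ha : 0 < a)
    (hV : Continuous V) {ξ : X} {μ : U} {c : ℝ} (hr : DifferentiableAt ℝ r ξ)
    (hrδ : ∀ ξ, 0 < r ξ ∧ r ξ ≤ δ ξ ∧ ‖fderiv ℝ r ξ‖ ≤ δ ξ)
    (hδ : ∀ ξ, IsMollificationRadius Ω f V a ρ ξ (δ ξ))
    (hμ : μ ∈ Ω) (hcρ : c ≤ ρ ξ / 2) (hc : c = 0 ∨ 3 * a ≤ V ξ) :
    ∀ᶠ t : ℝ in 𝓝[>] 0, ∀ z, ‖z‖ ≤ 1 →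
      max (V (ξ + t • f ξ μ - r (ξ + t • f ξ μ) • z) - a) 0 ≤
        max (V (ξ - r ξ • z) - a) 0 + -(c * t) := by
  set w := f ξ μ
  have hδ0 : 0 < δ ξ := (hrδ ξ).1.trans_le (hrδ ξ).2.1
  have hru : ∀ ξ z : X, ‖z‖ ≤ 1 → ‖-(r ξ • z)‖ ≤ δ ξ := fun ξ z hz => by
    rw [norm_neg, norm_smul, Real.norm_of_nonneg (hrδ ξ).1.le]
    exact (mul_le_of_le_one_right (hrδ ξ).1.le hz).trans (hrδ ξ).2.1
  have hslope : |fderiv ℝ r ξ w| < δ ξ * (1 + ‖w‖) :=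
    calc |fderiv ℝ r ξ w| ≤ δ ξ * ‖w‖ := (fderiv ℝ r ξ).le_of_opNorm_le (hrδ ξ).2.2 w
      _ < δ ξ * (1 + ‖w‖) := by linarith
  have hVt : ∀ᶠ t : ℝ in 𝓝[>] 0, V (ξ + t • w) < V ξ + a / 8 :=
    ((hV.tendsto ξ).comp (tendsto_add_smul_nhdsGT_zero ξ w)).eventually
      (Iio_mem_nhds (by linarith))
  have hct : ∀ᶠ t : ℝ in 𝓝[>] 0, 0 + t • c < a :=
    (tendsto_add_smul_nhdsGT_zero 0 c).eventually (Iio_mem_nhds ha)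
  filter_upwards [hVt, hct, eventually_abs_sub_lt_mul hr hslope, self_mem_nhdsWithin,
    nhdsWithin_le_nhds (Iio_mem_nhds hδ0)] with t hVt hct hκ (ht0 : 0 < t) (htδ : t < δ ξ) z hz
  rw [zero_add, smul_eq_mul, mul_comm] at hct
  set κ := t⁻¹ * (r (ξ + t • w) - r ξ) with hκ_def
  have hmove : ξ + t • w + -(r (ξ + t • w) • z) = ξ + -(r ξ • z) + t • (w - κ • z) := by
    rw [show r (ξ + t • w) = r ξ + t * κ by rw [hκ_def]; field_simp; ring]
    module
  have hv : ‖w - κ • z - w‖ ≤ δ ξ * (1 + ‖w‖) := by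
    rw [sub_sub_cancel_left, norm_neg, norm_smul, Real.norm_eq_abs]
    exact (mul_le_of_le_one_right (abs_nonneg _) hz).trans hκ.le
  obtain ⟨hstart, hdec⟩ := hδ ξ _ (hru ξ z hz)
  rw [sub_eq_add_neg (ξ + t • w), sub_eq_add_neg ξ]
  refine truncation_le hstart (hδ _ _ (hru _ z hz)).1 hVt hct (fun hhigh => ?_) hc
  rw [hmove]
  exact (hdec μ hμ hhigh _ hv t ⟨ht0.le, htδ.le⟩).trans
    (sub_le_sub_left (mul_le_mul_of_nonneg_right hcρ ht0.le) _)

theorem RobustDecay.exists_contDiff_of_continuous [InnerProductSpace ℝ X] [FiniteDimensional ℝ X]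
    [PseudoMetricSpace U] (hΩ : IsCompact Ω) (hf : Continuous fun p : X × U => f p.1 p.2)
    (hV : Continuous V) (hV0 : ∀ ξ, 0 ≤ V ξ) (hρ : Continuous ρ) (hρ0 : ∀ ξ, 0 < ρ ξ) (ha : 0 < a)
    (hdec : RobustDecay Ω f V (a / 2) ρ) :
    ∃ F : X → ℝ, ContDiff ℝ (⊤ : ℕ∞) F ∧ (∀ ξ, max (V ξ - 2 * a) 0 ≤ F ξ ∧ F ξ ≤ V ξ) ∧
      ∀ ξ, ∀ μ ∈ Ω, fderiv ℝ F ξ (f ξ μ) ≤ 0 ∧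
        (3 * a ≤ V ξ → fderiv ℝ F ξ (f ξ μ) ≤ -(ρ ξ / 2)) := by
  borelize X
  obtain ⟨r, δ, hr, hrδ⟩ := exists_contDiff_radius
    (P := IsMollificationRadius Ω f V a ρ) (fun h _ hc => h.mono hc)
    (hdec.exists_isMollificationRadius hΩ hf hV hρ hρ0 ha)
  have hVz : ∀ ξ z : X, ‖z‖ ≤ 1 → |V ξ - V (ξ - r ξ • z)| ≤ a / 8 := fun ξ z hz => by
    rw [sub_eq_add_neg ξ]
    refine ((hrδ ξ).2.2.2.2 _ ?_).1
    rw [norm_neg, norm_smul, Real.norm_of_nonneg (hrδ ξ).1.le]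
    exact (mul_le_of_le_one_right (hrδ ξ).1.le hz).trans (hrδ ξ).2.1
  have hG : Continuous fun ξ => max (V ξ - a) 0 := by fun_prop
  have hF : ContDiff ℝ (⊤ : ℕ∞) (mollify r fun ξ => max (V ξ - a) 0) :=
    contDiff_mollify hr (fun ξ => ⟨(hrδ ξ).1, (hrδ ξ).2.1.trans (hrδ ξ).2.2.2.1⟩) hG
  have hderiv : ∀ ξ, ∀ μ ∈ Ω, ∀ c ≤ ρ ξ / 2, c = 0 ∨ 3 * a ≤ V ξ →
      fderiv ℝ (mollify r fun ξ => max (V ξ - a) 0) ξ (f ξ μ) ≤ -c := fun ξ μ hμ c hcρ hc => by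
    refine fderiv_le_of_eventually_le (hF.differentiable (by simp) ξ) ?_
    filter_upwards [eventually_truncation_le ha hV (hr.differentiable (by simp) ξ)
      (fun ξ => ⟨(hrδ ξ).1, (hrδ ξ).2.1, (hrδ ξ).2.2.1⟩) (fun ξ => (hrδ ξ).2.2.2.2) hμ hcρ hc]
      with t ht
    rw [sub_eq_add_neg]
    exact mollify_le_mollify_add hG ht
  refine ⟨_, hF, fun ξ => ⟨le_mollify hG fun z hz => ?_, mollify_le hG fun z hz => ?_⟩,
    fun ξ μ hμ => ⟨?_, fun h3a => hderiv ξ μ hμ _ le_rfl (Or.inr h3a)⟩⟩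
  · exact max_le_max_right _ (by linarith [(abs_le.1 (hVz ξ z hz)).2])
  · exact max_le (by linarith [(abs_le.1 (hVz ξ z hz)).1]) (hV0 ξ)
  · exact (hderiv ξ μ hμ 0 (half_pos (hρ0 ξ)).le (Or.inl rfl)).trans_eq neg_zero

theorem summable_and_tsum_le_of_le_half_pow {δ F : ℕ → ℝ} {v : ℝ}
    (hδ : ∀ k, 0 < δ k ∧ δ k ≤ (1 / 2) ^ k) (hF : ∀ k, 0 ≤ F k ∧ F k ≤ v) :
    Summable (fun k => δ k * F k) ∧ ∑' k, δ k * F k ≤ 2 * v := by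
  have hgeo : HasSum (fun k : ℕ => (1 / 2 : ℝ) ^ k * v) (2 * v) := hasSum_geometric_two.mul_right v
  have hle : ∀ k, δ k * F k ≤ (1 / 2 : ℝ) ^ k * v := fun k =>
    mul_le_mul (hδ k).2 (hF k).2 (hF k).1 (by positivity)
  have hsum := Summable.of_nonneg_of_le (fun k => mul_nonneg (hδ k).1.le (hF k).1) hle hgeo.summable
  exact ⟨hsum, hasSum_le hle hsum.hasSum hgeo⟩

theorem exists_contDiff_decaysOnBands [InnerProductSpace ℝ X] [FiniteDimensional ℝ X]
    [PseudoMetricSpace U] (hΩ : IsCompact Ω) (hf : Continuous fun p : X × U => f p.1 p.2)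
    (hV : Continuous V) (hV0 : ∀ ξ, 0 ≤ V ξ) {q : X → ℝ} (hq : Continuous q) (hq0 : ∀ ξ, 0 ≤ q ξ)
    (hdec : ∀ a, 0 < a → ∃ θ : ℝ → ℝ, Continuous θ ∧ (∀ b, 0 < θ b) ∧
      RobustDecay Ω f V a fun ξ => θ (q ξ)) :
    ∃ (W : X → ℝ) (Φ : ℝ → ℝ), ContDiff ℝ (⊤ : ℕ∞) W ∧ IsClassKInfty Φ ∧
      (∀ ξ, 0 ≤ W ξ ∧ Φ (V ξ) ≤ W ξ ∧ W ξ ≤ 2 * V ξ) ∧ DecaysOnBands Ω f W q := by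
  have hlevel : ∀ k : ℕ, (0 : ℝ) < 1 / (k + 1) := fun k => by positivity
  choose θ hθ hθ0 hdecθ using fun k : ℕ => hdec (1 / (k + 1) / 2) (half_pos (hlevel k))
  choose F hF hFV hFd using fun k : ℕ => (hdecθ k).exists_contDiff_of_continuous hΩ hf hV hV0
    ((hθ k).comp hq) (fun ξ => hθ0 k (q ξ)) (hlevel k)
  obtain ⟨δ, hδ, hW, hsum⟩ := exists_weights_contDiff_tsum hF
  have hF0 : ∀ ξ k, 0 ≤ F k ξ ∧ F k ξ ≤ V ξ := fun ξ k =>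
    ⟨(le_max_right _ _).trans (hFV k ξ).1, (hFV k ξ).2⟩
  have hsumW := fun ξ => summable_and_tsum_le_of_le_half_pow hδ (hF0 ξ)
  have hterm : ∀ ξ, ∀ μ ∈ Ω, ∀ k, δ k * fderiv ℝ (F k) ξ (f ξ μ) ≤ 0 := fun ξ μ hμ k =>
    mul_nonpos_of_nonneg_of_nonpos (hδ k).1.le (hFd k ξ μ hμ).1
  have hδs : Summable δ :=
    Summable.of_nonneg_of_le (fun k => (hδ k).1.le) (fun k => (hδ k).2) summable_geometric_two
  have hc0 : ∀ k : ℕ, 0 ≤ 2 * (1 / ((k : ℝ) + 1)) := fun k => by positivity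
  have hc : Tendsto (fun k : ℕ => 2 * (1 / ((k : ℝ) + 1))) atTop (𝓝 0) := by
    simpa using tendsto_one_div_add_atTop_nhds_zero_nat.const_mul (2 : ℝ)
  refine ⟨_, _, hW, isClassKInfty_hingeSeries (fun k => (hδ k).1) hδs hc0 hc, fun ξ =>
    ⟨tsum_nonneg fun k => mul_nonneg (hδ k).1.le (hF0 ξ k).1, ?_, (hsumW ξ).2⟩,
    fun ξ μ hμ => (hsum ξ _).nonpos (hterm ξ μ hμ), fun a b ha => ?_⟩
  · exact (summable_hinge (fun k => (hδ k).1.le) hδs hc0 (V ξ)).tsum_le_tsum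
      (fun k => mul_le_mul_of_nonneg_left (hFV k ξ).1 (hδ k).1.le) (hsumW ξ).1
  obtain ⟨k, hk⟩ := exists_nat_one_div_lt (show (0 : ℝ) < a / 6 by positivity)
  obtain ⟨c, hc, hcθ⟩ := exists_pos_forall_le_of_continuous (hθ k) (hθ0 k) b
  refine ⟨δ k * (c / 2), mul_pos (hδ k).1 (half_pos hc), fun ξ hξ hqb μ hμ => ?_⟩
  have hVξ : 3 * (1 / ((k : ℝ) + 1)) ≤ V ξ := by linarith [(hsumW ξ).2]
  have hrate : δ k * (c / 2) ≤ -(δ k * fderiv ℝ (F k) ξ (f ξ μ)) := by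
    have hcq : c ≤ θ k (q ξ) := hcθ (q ξ) (by rwa [Real.norm_of_nonneg (hq0 ξ)])
    have hFk : fderiv ℝ (F k) ξ (f ξ μ) ≤ -(θ k (q ξ) / 2) := (hFd k ξ μ hμ).2 hVξ
    rw [← mul_neg]
    exact mul_le_mul_of_nonneg_left (by linarith) (hδ k).1.le
  exact le_neg.1 (hrate.trans (le_hasSum (hsum ξ (f ξ μ)).neg k fun j _ =>
    neg_nonneg.2 (hterm ξ μ hμ j)))

end

/-! ### Integral equations -/

section

variable {X U : Type*} [NormedAddCommGroup X] [NormedSpace ℝ X] {f : X → U → X} {d d' : ℝ → U}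
  {ξ ξ' : X} {z z' : ℝ → X} {L B s t τ : ℝ}

theorem le_mul_exp_of_le_add_integral {u : ℝ → ℝ} {a : ℝ} (hL : 0 ≤ L)
    (hu : ContinuousOn u (Ici 0)) (h : ∀ t, 0 ≤ t → u t ≤ a + ∫ s in (0 : ℝ)..t, L * u s)
    (ht : 0 ≤ t) : u t ≤ a * Real.exp (L * t) := by
  set w : ℝ → ℝ := fun s => L * u (max s 0)
  have hw : Continuous w := continuous_const.mul
    (hu.comp_continuous (continuous_id.max continuous_const) fun s => le_max_right s 0)
  have hwu : ∀ s, 0 ≤ s → w s = L * u s := fun s hs => by simp only [w, max_eq_left hs]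
  have hle : ∀ t, 0 ≤ t → u t ≤ a + ∫ s in (0 : ℝ)..t, w s := fun t ht => by
    refine (h t ht).trans_eq (congrArg (a + ·) (intervalIntegral.integral_congr fun s hs => ?_))
    rw [uIcc_of_le ht] at hs
    exact (hwu s hs.1).symm
  have hder : ∀ t, HasDerivAt (fun t => a + ∫ s in (0 : ℝ)..t, w s) (w t) t := fun t =>
    (intervalIntegral.integral_hasDerivAt_right (hw.intervalIntegrable _ _)
      (hw.stronglyMeasurableAtFilter _ _) hw.continuousAt).const_add a
  have hgronwall := le_gronwallBound_of_liminf_deriv_right_le (δ := a) (K := L) (ε := 0)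
    (fun s _ => (hder s).continuousAt.continuousWithinAt)
    (fun s _ r hr => (hder s).hasDerivWithinAt.liminf_right_slope_le hr) (by simp)
    (fun s hs => by
      rw [add_zero, hwu s hs.1]
      exact mul_le_mul_of_nonneg_left (hle s hs.1) hL) t ⟨ht, le_rfl⟩
  rw [gronwallBound_ε0, sub_zero] at hgronwall
  exact (hle t ht).trans hgronwall

/-- `z` solves `ż = f(z, d)`, `z(0) = ξ` on `[0,∞)` in integrated form. Integrability is part of the
notion, so that the integral equation never refers to the value `0` of an undefined integral. -/
structure IsIntegralSolution (f : X → U → X) (d : ℝ → U) (ξ : X) (z : ℝ → X) : Prop where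
  intervalIntegrable_zero : ∀ t, 0 ≤ t → IntervalIntegrable (fun s => f (z s) (d s)) volume 0 t
  eq_add_integral : ∀ t, 0 ≤ t → z t = ξ + ∫ s in (0 : ℝ)..t, f (z s) (d s)

theorem aestronglyMeasurable_Ioi_of_forall_lt {Y : Type*} [TopologicalSpace Y]
    [TopologicalSpace.PseudoMetrizableSpace Y] {μ : Measure ℝ} [NullSingletonClass μ]
    {g : ℝ → Y} {a b : ℝ}
    (hlow : ∀ t < b, AEStronglyMeasurable g (μ.restrict (Ioc a t)))
    (hhigh : AEStronglyMeasurable g (μ.restrict (Ioi b))) :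
    AEStronglyMeasurable g (μ.restrict (Ioi a)) := by
  obtain ⟨u, -, hub, hu⟩ := exists_seq_strictMono_tendsto b
  have hsing : AEStronglyMeasurable g (μ.restrict {b}) := by
    rw [Measure.restrict_singleton, measure_singleton, zero_smul]
    exact aestronglyMeasurable_zero_measure g
  have hIoo : AEStronglyMeasurable g (μ.restrict (⋃ k, Ioc a (u k))) :=
    aestronglyMeasurable_iUnion_iff.2 fun k => hlow (u k) (hub k)
  refine AEStronglyMeasurable.mono_set (fun r (hr : a < r) => ?_) (aestronglyMeasurable_union_iff.2
    ⟨aestronglyMeasurable_union_iff.2 ⟨hIoo, hsing⟩, hhigh⟩)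
  rcases lt_trichotomy r b with hlt | rfl | hgt
  · obtain ⟨k, hk⟩ := (hu.eventually (Ioi_mem_nhds hlt)).exists
    exact Or.inl (Or.inl (mem_iUnion.2 ⟨k, hr, le_of_lt hk⟩))
  · exact Or.inl (Or.inr rfl)
  · exact Or.inr hgt

-- Beyond the last time of integrability the integral is `0` by convention, so `z` stays at `ξ` and
-- the integrand is `f ξ ∘ d`, which is measurable after all.
theorem aestronglyMeasurable_of_eq_add_integral [TopologicalSpace U] [SecondCountableTopology U]
    [MeasurableSpace U] [OpensMeasurableSpace U]
    (hf : Continuous (f ξ)) (hd : Measurable d)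
    (hz : ∀ t, 0 ≤ t → z t = ξ + ∫ s in (0 : ℝ)..t, f (z s) (d s)) :
    AEStronglyMeasurable (fun s => f (z s) (d s)) (volume.restrict (Ioi 0)) := by
  set g : ℝ → X := fun s => f (z s) (d s)
  set A : Set ℝ := {t | 0 ≤ t ∧ IntervalIntegrable g volume 0 t}
  have hA0 : (0 : ℝ) ∈ A := ⟨le_rfl, IntervalIntegrable.refl⟩
  have hmeasA : ∀ t ∈ A, AEStronglyMeasurable g (volume.restrict (Ioc 0 t)) := fun t ht =>
    ht.2.aestronglyMeasurable
  by_cases hA : BddAbove A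
  · refine aestronglyMeasurable_Ioi_of_forall_lt (b := sSup A) (fun t ht => ?_) ?_
    · obtain ⟨s, hs, hts⟩ := exists_lt_of_lt_csSup ⟨0, hA0⟩ ht
      exact (hmeasA s hs).mono_set (Ioc_subset_Ioc_right hts.le)
    · refine (hf.stronglyMeasurable.comp_measurable hd).aestronglyMeasurable.congr ?_
      filter_upwards [ae_restrict_mem measurableSet_Ioi] with r (hr : sSup A < r)
      have hr0 : 0 ≤ r := (le_csSup hA hA0).trans hr.le
      have hrA : ¬IntervalIntegrable g volume 0 r := fun hi => notMem_of_csSup_lt hr hA ⟨hr0, hi⟩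
      change f ξ (d r) = f (z r) (d r)
      rw [hz r hr0, intervalIntegral.integral_undef hrA, add_zero]
  · rw [not_bddAbove_iff] at hA
    choose u huA hu using fun k : ℕ => hA k
    refine AEStronglyMeasurable.mono_set (fun r (hr : 0 < r) => ?_)
      (aestronglyMeasurable_iUnion_iff.2 fun k => hmeasA (u k) (huA k))
    obtain ⟨k, hk⟩ := exists_nat_gt r
    exact mem_iUnion.2 ⟨k, hr, (hk.trans (hu k)).le⟩

theorem isIntegralSolution_of_norm_le [TopologicalSpace U] [SecondCountableTopology U]
    [MeasurableSpace U] [OpensMeasurableSpace U]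
    (hf : Continuous (f ξ)) (hd : Measurable d)
    (hz : ∀ t, 0 ≤ t → z t = ξ + ∫ s in (0 : ℝ)..t, f (z s) (d s))
    (hB : ∀ t, 0 ≤ t → ‖f (z t) (d t)‖ ≤ B) : IsIntegralSolution f d ξ z := by
  refine ⟨fun t ht => ?_, hz⟩
  rw [intervalIntegrable_iff_integrableOn_Ioc_of_le ht]
  refine IntegrableOn.of_bound measure_Ioc_lt_top
    ((aestronglyMeasurable_of_eq_add_integral hf hd hz).mono_set Ioc_subset_Ioi_self) B ?_
  filter_upwards [ae_restrict_mem measurableSet_Ioc] with s hs using hB s hs.1.le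

namespace IsIntegralSolution

theorem apply_zero (h : IsIntegralSolution f d ξ z) : z 0 = ξ := by
  simpa using h.eq_add_integral 0 le_rfl

theorem intervalIntegrable (h : IsIntegralSolution f d ξ z) (hs : 0 ≤ s) (ht : 0 ≤ t) :
    IntervalIntegrable (fun r => f (z r) (d r)) volume s t :=
  (h.intervalIntegrable_zero s hs).symm.trans (h.intervalIntegrable_zero t ht)

theorem sub_eq_integral (h : IsIntegralSolution f d ξ z) (hs : 0 ≤ s) (ht : 0 ≤ t) :
    z t - z s = ∫ r in s..t, f (z r) (d r) := by
  rw [h.eq_add_integral t ht, h.eq_add_integral s hs, add_sub_add_left_eq_sub,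
    intervalIntegral.integral_interval_sub_left (h.intervalIntegrable_zero t ht)
      (h.intervalIntegrable_zero s hs)]

theorem continuousOn (h : IsIntegralSolution f d ξ z) : ContinuousOn z (Ici 0) := by
  intro t (ht : 0 ≤ t)
  have hprim := intervalIntegral.continuousOn_primitive_interval'
    (h.intervalIntegrable_zero (t + 1) (by linarith)) left_mem_uIcc
  rw [uIcc_of_le (by linarith)] at hprim
  have hIcc : ContinuousOn z (Icc 0 (t + 1)) :=
    (hprim.const_add ξ).congr fun s hs => h.eq_add_integral s hs.1
  refine (hIcc t ⟨ht, by linarith⟩).mono_of_mem_nhdsWithin ?_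
  rw [← Ici_inter_Iic]
  exact inter_mem self_mem_nhdsWithin (nhdsWithin_le_nhds (Iic_mem_nhds (by linarith)))

theorem shift (h : IsIntegralSolution f d ξ z) (hτ : 0 ≤ τ)
    (hd : ∀ s, 0 ≤ s → d (τ + s) = d' s) :
    IsIntegralSolution f d' (z τ) fun s => z (τ + s) := by
  have hcongr : ∀ t, 0 ≤ t → EqOn (fun s => f (z (τ + s)) (d (τ + s)))
      (fun s => f (z (τ + s)) (d' s)) (uIcc 0 t) := fun t ht s hs => by
    rw [uIcc_of_le ht] at hs
    change f (z (τ + s)) (d (τ + s)) = _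
    rw [hd s hs.1]
  refine ⟨fun t ht => ?_, fun t ht => ?_⟩
  · have hint := (h.intervalIntegrable hτ (add_nonneg hτ ht)).comp_add_left τ
    rw [sub_self, add_sub_cancel_left] at hint
    exact hint.congr ((hcongr t ht).mono uIoc_subset_uIcc)
  · rw [← intervalIntegral.integral_congr (hcongr t ht),
      intervalIntegral.integral_comp_add_left (fun r => f (z r) (d r)) τ, add_zero,
      ← h.sub_eq_integral hτ (add_nonneg hτ ht), add_sub_cancel]

theorem norm_sub_le_mul_exp (h : IsIntegralSolution f d ξ z) (h' : IsIntegralSolution f d ξ' z')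
    (hL : 0 ≤ L)
    (hlip : ∀ s, 0 ≤ s → ‖f (z s) (d s) - f (z' s) (d s)‖ ≤ L * ‖z s - z' s‖) (ht : 0 ≤ t) :
    ‖z t - z' t‖ ≤ ‖ξ - ξ'‖ * Real.exp (L * t) := by
  have hcont : ContinuousOn (fun s => ‖z s - z' s‖) (Ici 0) :=
    (h.continuousOn.sub h'.continuousOn).norm
  refine le_mul_exp_of_le_add_integral hL hcont (fun t ht => ?_) ht
  have hsub : z t - z' t = (ξ - ξ') + ∫ s in (0 : ℝ)..t, (f (z s) (d s) - f (z' s) (d s)) := by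
    rw [intervalIntegral.integral_sub (h.intervalIntegrable_zero t ht)
      (h'.intervalIntegrable_zero t ht), h.eq_add_integral t ht, h'.eq_add_integral t ht]
    abel
  rw [hsub]
  refine (norm_add_le _ _).trans (add_le_add_right ?_ _)
  refine intervalIntegral.norm_integral_le_of_norm_le ht
    (ae_of_all _ fun s hs => hlip s hs.1.le) (ContinuousOn.intervalIntegrable ?_)
  rw [uIcc_of_le ht]
  exact (hcont.mono Icc_subset_Ici_self).const_mul L

theorem norm_sub_le (h : IsIntegralSolution f d ξ z) (hB : ∀ s, 0 ≤ s → ‖f (z s) (d s)‖ ≤ B)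
    (ht : 0 ≤ t) : ‖z t - ξ‖ ≤ B * t := by
  have hle : ‖∫ s in (0 : ℝ)..t, f (z s) (d s)‖ ≤ B * |t - 0| :=
    intervalIntegral.norm_integral_le_of_norm_le_const fun s hs => by
      rw [uIoc_of_le ht] at hs
      exact hB s hs.1.le
  rwa [← h.sub_eq_integral le_rfl ht, h.apply_zero, sub_zero, abs_of_nonneg ht] at hle

theorem norm_sub_add_smul_le [CompleteSpace X] (h : IsIntegralSolution f d ξ z) {μ : U} (hL : 0 ≤ L)
    (hB : ∀ s, 0 ≤ s → ‖f (z s) (d s)‖ ≤ B)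
    (hlip : ∀ s, 0 ≤ s → ‖f (z s) μ - f ξ μ‖ ≤ L * ‖z s - ξ‖) (ht : 0 ≤ t)
    (hμ : ∀ s, 0 ≤ s → s < t → d s = μ) : ‖z t - (ξ + t • f ξ μ)‖ ≤ L * B * t ^ 2 := by
  have hB0 : 0 ≤ B := (norm_nonneg _).trans (hB 0 le_rfl)
  have hexp : z t - (ξ + t • f ξ μ) = ∫ s in (0 : ℝ)..t, (f (z s) (d s) - f ξ μ) := by
    rw [intervalIntegral.integral_sub (h.intervalIntegrable_zero t ht) intervalIntegrable_const,
      ← h.sub_eq_integral le_rfl ht, intervalIntegral.integral_const, sub_zero, h.apply_zero]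
    abel
  have hle : ‖∫ s in (0 : ℝ)..t, (f (z s) (d s) - f ξ μ)‖ ≤ L * (B * t) * |t - 0| := by
    refine intervalIntegral.norm_integral_le_of_norm_le_const_ae ?_
    filter_upwards [Measure.ae_ne volume t] with s hst hs
    rw [uIoc_of_le ht] at hs
    rw [hμ s hs.1.le (lt_of_le_of_ne hs.2 hst)]
    calc ‖f (z s) μ - f ξ μ‖ ≤ L * ‖z s - ξ‖ := hlip s hs.1.le
      _ ≤ L * (B * t) := by
          gcongr
          exact (h.norm_sub_le hB hs.1.le).trans (mul_le_mul_of_nonneg_left hs.2 hB0)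
  calc ‖z t - (ξ + t • f ξ μ)‖ ≤ L * (B * t) * |t - 0| := hexp ▸ hle
    _ = L * B * t ^ 2 := by rw [sub_zero, abs_of_nonneg ht]; ring

end IsIntegralSolution

end

/-! ### The weighted output supremum -/

/-- A weight increasing from `1` to `2`: multiplying an output by it makes the supremum over all
future times decrease strictly as time passes. -/
def timeWeight (t : ℝ) : ℝ := 2 - 1 / (1 + t)

theorem one_le_timeWeight {t : ℝ} (ht : 0 ≤ t) : 1 ≤ timeWeight t := by
  have hle : 1 / (1 + t) ≤ 1 := (div_le_one (by linarith)).2 (by linarith)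
  unfold timeWeight
  linarith

theorem timeWeight_le_two {t : ℝ} (ht : 0 ≤ t) : timeWeight t ≤ 2 :=
  sub_le_self 2 (by positivity)

theorem timeWeight_le_mul {s t τ : ℝ} (hτ : 0 < τ) (hτ1 : τ ≤ 1) (hs : 0 ≤ s) (hsτ : s ≤ 1 / τ)
    (ht : t ∈ Icc (0 : ℝ) 1) : timeWeight s ≤ (1 - τ ^ 2 / 12 * t) * timeWeight (t + s) := by
  obtain ⟨ht0, ht1⟩ := ht
  rw [le_div_iff₀ hτ] at hsτ
  have hdiff : timeWeight (t + s) - timeWeight s = t * (1 / ((1 + s) * (1 + (t + s)))) := by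
    have h₁ : 1 + s ≠ 0 := by positivity
    have h₂ : 1 + (t + s) ≠ 0 := by positivity
    unfold timeWeight
    field_simp
    ring
  have hrate : τ ^ 2 / 6 ≤ 1 / ((1 + s) * (1 + (t + s))) := by
    rw [div_le_div_iff₀ (by norm_num) (by positivity), one_mul]
    calc τ ^ 2 * ((1 + s) * (1 + (t + s))) = (τ * (1 + s)) * (τ * (1 + (t + s))) := by ring
      _ ≤ 2 * 3 := mul_le_mul (by linarith) (by nlinarith) (by positivity) (by norm_num)
      _ = 6 := by norm_num
  have hgain : t * (τ ^ 2 / 6) ≤ timeWeight (t + s) - timeWeight s :=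
    hdiff ▸ mul_le_mul_of_nonneg_left hrate ht0
  have hw : τ ^ 2 / 12 * t * timeWeight (t + s) ≤ τ ^ 2 / 12 * t * 2 :=
    mul_le_mul_of_nonneg_left (timeWeight_le_two (add_nonneg ht0 hs)) (by positivity)
  linarith

/-- The supremum of the weighted outputs `timeWeight t * y d ξ t` over all times `t ≥ 0` and all
indices `d`, where `y d ξ` is the output signal from the initial state `ξ` under the disturbance
`d`. -/
def outputSup {ι X : Type*} (y : ι → X → ℝ → ℝ) (ξ : X) : ℝ :=
  ⨆ p : ι × Ici (0 : ℝ), timeWeight p.2 * y p.1 ξ p.2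

/-- The output signals `y d ξ` are dominated by `β (q ξ)` with `β` of class `KL`, and the signal
from a state `η` near `ξ + t • f ξ μ` is, up to a first-order error, the tail after time `t` of a
signal from `ξ`, under a disturbance equal to `μ` until time `t`. -/
structure IsDecayingOutput {ι X U : Type*} [NormedAddCommGroup X] [NormedSpace ℝ X] (Ω : Set U)
    (f : X → U → X) (β : ℝ → ℝ → ℝ) (q : X → ℝ) (y : ι → X → ℝ → ℝ) : Prop where
  isClassKL : IsClassKL β
  gauge_nonneg : ∀ ξ, 0 ≤ q ξ
  nonneg : ∀ d ξ t, 0 ≤ y d ξ t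
  le_apply : ∀ d ξ t, 0 ≤ t → y d ξ t ≤ β (q ξ) t
  exists_le_add : ∀ R T : ℝ, ∃ C : ℝ, 0 ≤ C ∧ ∀ ξ η, ‖ξ‖ ≤ R → ‖η‖ ≤ R → ∀ μ ∈ Ω, ∀ t, 0 ≤ t →
    ∀ d, ∀ s ∈ Icc 0 T, ∃ d', y d η s ≤ y d' ξ (t + s) + C * (‖ξ + t • f ξ μ - η‖ + t ^ 2)

theorem exists_forall_norm_smul_le {X U : Type*} [NormedAddCommGroup X] [NormedSpace ℝ X]
    [ProperSpace X] [TopologicalSpace U] {Ω : Set U} (hΩ : IsCompact Ω) {f : X → U → X}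
    (hf : Continuous fun p : X × U => f p.1 p.2) (R : ℝ) {δ : ℝ} (hδ : 0 < δ) :
    ∃ ε₀ : ℝ, 0 < ε₀ ∧ ∀ ε ≤ ε₀, ∀ ξ, ‖ξ‖ ≤ R → ∀ μ ∈ Ω, ∀ v, ‖v - f ξ μ‖ ≤ ε →
      ∀ t ∈ Icc 0 ε, ‖t • v‖ ≤ δ := by
  obtain ⟨B, hB⟩ := ((isCompact_closedBall (0 : X) R).prod hΩ).exists_bound_of_continuousOn
    hf.continuousOn
  have hB0 : 0 < max B 0 + 1 := by positivity
  refine ⟨min 1 (δ / (max B 0 + 1)), by positivity, fun ε hε ξ hξ μ hμ v hv t ht => ?_⟩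
  have hvB : ‖v‖ ≤ max B 0 + 1 :=
    calc ‖v‖ ≤ ‖f ξ μ‖ + ‖v - f ξ μ‖ := norm_le_norm_add_norm_sub' v (f ξ μ)
      _ ≤ max B 0 + 1 := add_le_add
          ((hB (ξ, μ) ⟨mem_closedBall_zero_iff.2 hξ, hμ⟩).trans (le_max_left _ _))
          (hv.trans (hε.trans (min_le_left _ _)))
  rw [norm_smul, Real.norm_of_nonneg ht.1]
  calc t * ‖v‖ ≤ δ / (max B 0 + 1) * (max B 0 + 1) := by
        gcongr
        exact ht.2.trans (hε.trans (min_le_right _ _))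
    _ = δ := div_mul_cancel₀ δ hB0.ne'

theorem exists_forall_norm_le_and_le_add_one {X U : Type*} [NormedAddCommGroup X]
    [NormedSpace ℝ X] [ProperSpace X] [TopologicalSpace U] {Ω : Set U} (hΩ : IsCompact Ω)
    {f : X → U → X} (hf : Continuous fun p : X × U => f p.1 p.2) {q : X → ℝ} (hq : Continuous q)
    (R : ℝ) :
    ∃ ε₀ : ℝ, 0 < ε₀ ∧ ∀ ε ≤ ε₀, ∀ ξ, ‖ξ‖ ≤ R → ∀ μ ∈ Ω, ∀ v, ‖v - f ξ μ‖ ≤ ε →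
      ∀ t ∈ Icc 0 ε, ‖ξ + t • v‖ ≤ R + 1 ∧ q (ξ + t • v) ≤ q ξ + 1 := by
  obtain ⟨δ, hδ, hqδ⟩ := exists_forall_norm_sub_lt_of_isCompact isCompact_univ
    (g := fun ξ (_ : Unit) => q ξ) (by fun_prop) R one_pos
  obtain ⟨ε₀, hε₀, hstep⟩ := exists_forall_norm_smul_le hΩ hf R (show 0 < min δ 1 by positivity)
  refine ⟨ε₀, hε₀, fun ε hε ξ hξ μ hμ v hv t ht => ?_⟩
  have htv := le_min_iff.1 (hstep ε hε ξ hξ μ hμ v hv t ht)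
  have hlt := hqδ ξ hξ (t • v) htv.1 () trivial
  rw [Real.norm_eq_abs, abs_lt] at hlt
  exact ⟨(norm_add_le _ _).trans (add_le_add hξ htv.2), by linarith⟩

theorem norm_add_smul_sub_add_sq_le {X : Type*} [NormedAddCommGroup X] [NormedSpace ℝ X]
    {ξ v w : X} {ε t : ℝ} (hv : ‖v - w‖ ≤ ε) (ht : t ∈ Icc 0 ε) :
    ‖ξ + t • w - (ξ + t • v)‖ + t ^ 2 ≤ 2 * ε * t := by
  rw [add_sub_add_left_eq_sub, ← smul_sub, norm_smul, Real.norm_of_nonneg ht.1, norm_sub_rev]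
  nlinarith [ht.1, ht.2]

namespace IsDecayingOutput

variable {ι X U : Type*} [NormedAddCommGroup X] [NormedSpace ℝ X] {Ω : Set U} {f : X → U → X}
  {β : ℝ → ℝ → ℝ} {q : X → ℝ} {y : ι → X → ℝ → ℝ} {ξ η : X} {a c s t τ : ℝ}

theorem timeWeight_mul_le_two_mul (hy : IsDecayingOutput Ω f β q y) {d : ι} (ht : 0 ≤ t)
    (hc : y d ξ t ≤ c) : timeWeight t * y d ξ t ≤ 2 * c :=
  mul_le_mul (timeWeight_le_two ht) hc (hy.nonneg d ξ t) two_pos.le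

theorem le_outputSup (hy : IsDecayingOutput Ω f β q y) (d : ι) (ξ : X) (ht : 0 ≤ t) :
    timeWeight t * y d ξ t ≤ outputSup y ξ := by
  have hbdd : BddAbove (range fun p : ι × Ici (0 : ℝ) => timeWeight p.2 * y p.1 ξ p.2) := by
    refine ⟨2 * β (q ξ) 0, forall_mem_range.2 fun p => hy.timeWeight_mul_le_two_mul p.2.2 ?_⟩
    exact (hy.le_apply _ _ _ p.2.2).trans (hy.isClassKL.le_apply_zero (hy.gauge_nonneg ξ) p.2.2)
  exact le_ciSup hbdd (d, ⟨t, ht⟩)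

theorem apply_zero_le_outputSup (hy : IsDecayingOutput Ω f β q y) (d : ι) (ξ : X) :
    y d ξ 0 ≤ outputSup y ξ :=
  (le_mul_of_one_le_left (hy.nonneg d ξ 0) (one_le_timeWeight le_rfl)).trans
    (hy.le_outputSup d ξ le_rfl)

theorem outputSup_nonneg (hy : IsDecayingOutput Ω f β q y) (ξ : X) : 0 ≤ outputSup y ξ :=
  Real.iSup_nonneg fun p => mul_nonneg (zero_le_one.trans (one_le_timeWeight p.2.2))
    (hy.nonneg _ _ _)

theorem outputSup_le_two_mul (hy : IsDecayingOutput Ω f β q y) (hc0 : 0 ≤ c)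
    (hc : ∀ d t, 0 ≤ t → y d ξ t ≤ c) : outputSup y ξ ≤ 2 * c :=
  Real.iSup_le (fun p => hy.timeWeight_mul_le_two_mul p.2.2 (hc p.1 p.2 p.2.2)) (by positivity)

theorem outputSup_le_max (hy : IsDecayingOutput Ω f β q y) (hτ : 0 < τ) (hτ1 : τ ≤ 1)
    (ht : t ∈ Icc (0 : ℝ) 1) (ha : 0 ≤ a) (hc : 0 ≤ c)
    (hlate : ∀ d s, 1 / τ ≤ s → y d η s ≤ a)
    (hearly : ∀ d, ∀ s ∈ Icc 0 (1 / τ), ∃ d', y d η s ≤ y d' ξ (t + s) + c) :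
    outputSup y η ≤ max (2 * a) ((1 - τ ^ 2 / 12 * t) * outputSup y ξ + 2 * c) := by
  refine Real.iSup_le (fun ⟨d, s, (hs : 0 ≤ s)⟩ => ?_) (le_max_of_le_left (by positivity))
  rcases le_total (1 / τ) s with hτs | hsτ
  · exact le_max_of_le_left (hy.timeWeight_mul_le_two_mul hs (hlate d s hτs))
  obtain ⟨d', hd'⟩ := hearly d s ⟨hs, hsτ⟩
  have hfactor : 0 ≤ 1 - τ ^ 2 / 12 * t := by nlinarith [ht.1, ht.2]
  refine le_max_of_le_right ?_
  calc timeWeight s * y d η s ≤ timeWeight s * (y d' ξ (t + s) + c) :=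
        mul_le_mul_of_nonneg_left hd' (zero_le_one.trans (one_le_timeWeight hs))
    _ = timeWeight s * y d' ξ (t + s) + timeWeight s * c := mul_add _ _ _
    _ ≤ (1 - τ ^ 2 / 12 * t) * timeWeight (t + s) * y d' ξ (t + s) + 2 * c :=
        add_le_add (mul_le_mul_of_nonneg_right (timeWeight_le_mul hτ hτ1 hs hsτ ht)
          (hy.nonneg d' ξ _)) (mul_le_mul_of_nonneg_right (timeWeight_le_two hs) hc)
    _ ≤ (1 - τ ^ 2 / 12 * t) * outputSup y ξ + 2 * c := by
        rw [mul_assoc]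
        gcongr
        exact hy.le_outputSup d' ξ (add_nonneg ht.1 hs)

theorem exists_outputSup_le_add [ProperSpace X] (hy : IsDecayingOutput Ω f β q y)
    (hΩ : Ω.Nonempty) (hq : Continuous q) (R : ℝ) (ha : 0 < a) :
    ∃ C, 0 ≤ C ∧ ∀ ξ η, ‖ξ‖ ≤ R → ‖η‖ ≤ R →
      outputSup y η ≤ outputSup y ξ + a + C * ‖ξ - η‖ := by
  obtain ⟨μ, hμ⟩ := hΩ
  obtain ⟨τ, -, hτ⟩ := hy.isClassKL.exists_continuous_settling (half_pos ha)
  obtain ⟨Q, hQ⟩ := (isCompact_closedBall (0 : X) R).exists_bound_of_continuousOn hq.continuousOn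
  obtain ⟨hτ0, hτ1, hsettle⟩ := hτ Q
  obtain ⟨C, hC, hearly⟩ := hy.exists_le_add R (1 / τ Q)
  refine ⟨2 * C, by positivity, fun ξ η hξ hη => ?_⟩
  have hqη : q η ≤ Q := (le_abs_self _).trans (hQ η (mem_closedBall_zero_iff.2 hη))
  have hle := hy.outputSup_le_max (ξ := ξ) (η := η) (t := 0) (c := C * ‖ξ - η‖) hτ0 hτ1 (by simp)
    (half_pos ha).le (by positivity)
    (fun d s hs => (hy.le_apply d η s ((one_div_pos.2 hτ0).le.trans hs)).trans
      (hsettle _ s (hy.gauge_nonneg η) hqη hs))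
    (fun d s hs => by simpa using hearly ξ η hξ hη μ hμ 0 le_rfl d s hs)
  have hξ0 := hy.outputSup_nonneg ξ
  have hdist : 0 ≤ C * ‖ξ - η‖ := by positivity
  exact hle.trans (max_le (by linarith) (by linarith))

theorem continuous_outputSup [ProperSpace X] (hy : IsDecayingOutput Ω f β q y) (hΩ : Ω.Nonempty)
    (hq : Continuous q) : Continuous (outputSup y) := by
  refine Metric.continuous_iff.2 fun ξ a ha => ?_
  obtain ⟨C, hC, hle⟩ := hy.exists_outputSup_le_add hΩ hq (‖ξ‖ + 1) (half_pos ha)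
  refine ⟨min 1 (a / 2 / (C + 1)), by positivity, fun η hη => ?_⟩
  rw [dist_eq_norm, lt_min_iff, lt_div_iff₀ (by positivity)] at hη
  have hηR : ‖η‖ ≤ ‖ξ‖ + 1 := by linarith [norm_le_norm_add_norm_sub' η ξ]
  have hξη := hle ξ η (by linarith) hηR
  have hηξ := hle η ξ hηR (by linarith)
  rw [norm_sub_rev] at hξη
  have hsmall : C * ‖η - ξ‖ < a / 2 := by nlinarith [norm_nonneg (η - ξ)]
  rw [Real.dist_eq, abs_lt]
  constructor <;> linarith

theorem outputSup_le_sub (hy : IsDecayingOutput Ω f β q y) (hτ : 0 < τ) (hτ1 : τ ≤ 1)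
    (ha : 0 ≤ a) (hξ : a ≤ outputSup y ξ) (ht : t ∈ Icc (0 : ℝ) 1) (hc : 0 ≤ c)
    (hcτ : 4 * c ≤ τ ^ 2 / 12 * a)
    (hlate : ∀ d s, 1 / τ ≤ s → y d η s ≤ a / 4)
    (hearly : ∀ d, ∀ s ∈ Icc 0 (1 / τ), ∃ d', y d η s ≤ y d' ξ (t + s) + c * t) :
    outputSup y η ≤ outputSup y ξ - τ ^ 2 / 12 * (a / 2) * t := by
  have hle := hy.outputSup_le_max hτ hτ1 ht (by positivity) (mul_nonneg hc ht.1) hlate hearly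
  have hκ : τ ^ 2 / 12 * t ≤ 1 := by nlinarith [ht.1, ht.2]
  refine hle.trans (max_le ?_ ?_)
  · nlinarith
  · have hκξ : τ ^ 2 / 12 * t * a ≤ τ ^ 2 / 12 * t * outputSup y ξ :=
      mul_le_mul_of_nonneg_left hξ (mul_nonneg (by positivity) ht.1)
    have hct : 4 * c * t ≤ τ ^ 2 / 12 * a * t := mul_le_mul_of_nonneg_right hcτ ht.1
    linarith

theorem exists_robustDecay_outputSup [ProperSpace X] [TopologicalSpace U]
    (hy : IsDecayingOutput Ω f β q y) (hΩ : IsCompact Ω)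
    (hf : Continuous fun p : X × U => f p.1 p.2) (hq : Continuous q) (ha : 0 < a) :
    ∃ θ : ℝ → ℝ, Continuous θ ∧ (∀ b, 0 < θ b) ∧
      RobustDecay Ω f (outputSup y) a fun ξ => θ (q ξ) := by
  obtain ⟨τ, hτc, hτ⟩ := hy.isClassKL.exists_continuous_settling (show 0 < a / 4 by positivity)
  refine ⟨fun b => τ (b + 1) ^ 2 / 12 * (a / 2), by fun_prop, fun b => ?_, fun R => ?_⟩
  · have := (hτ (b + 1)).1
    positivity
  obtain ⟨τ₀, hτ₀, hτR⟩ := exists_pos_forall_le_of_continuous (ρ := fun ξ => τ (q ξ + 1))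
    (by fun_prop) (fun ξ => (hτ _).1) R
  obtain ⟨C, hC, hearly⟩ := hy.exists_le_add (R + 1) (1 / τ₀)
  obtain ⟨ε₀, hε₀, hstep⟩ := exists_forall_norm_le_and_le_add_one hΩ hf hq R
  obtain ⟨ε, hε, hεmin⟩ : ∃ ε, 0 < ε ∧
      ε ≤ min (min ε₀ 1) (τ₀ ^ 2 / 12 * a / (8 * (C + 1))) := ⟨_, by positivity, le_rfl⟩
  simp only [le_min_iff] at hεmin
  obtain ⟨⟨hεε₀, hε1⟩, hεC⟩ := hεmin
  rw [le_div_iff₀ (by positivity)] at hεC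
  refine ⟨ε, hε, fun ξ hξ haV μ hμ v hv t ht => ?_⟩
  obtain ⟨hτξ, hτξ1, hsettle⟩ := hτ (q ξ + 1)
  obtain ⟨hη, hqη⟩ := hstep ε hεε₀ ξ hξ μ hμ v hv t ht
  have hτ₀ξ : τ₀ ^ 2 / 12 * a ≤ τ (q ξ + 1) ^ 2 / 12 * a := by
    have := hτR ξ hξ
    gcongr
  refine hy.outputSup_le_sub (c := C * (2 * ε)) hτξ hτξ1 ha.le haV ⟨ht.1, ht.2.trans hε1⟩
    (by positivity) (by linarith) (fun d s hs => ?_) (fun d s hs => ?_)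
  · exact (hy.le_apply d _ s ((one_div_pos.2 hτξ).le.trans hs)).trans
      (hsettle _ s (hy.gauge_nonneg _) hqη hs)
  · obtain ⟨d', hd'⟩ := hearly ξ _ (by linarith) hη μ hμ t ht.1 d s
      ⟨hs.1, hs.2.trans (one_div_le_one_div_of_le hτ₀ (hτR ξ hξ))⟩
    refine ⟨d', hd'.trans (add_le_add_right ?_ _)⟩
    rw [mul_assoc C]
    exact mul_le_mul_of_nonneg_left (norm_add_smul_sub_add_sq_le hv ht) hC

end IsDecayingOutput

/-! ### Trajectories of uniformly bounded systems -/

section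

variable {X Y : Type*} [NormedAddCommGroup X] [NormedAddCommGroup Y]

theorem exists_norm_sub_le_of_locallyLipschitz {g : X → Y} (hg : LocallyLipschitz g) {K : Set X}
    (hK : IsCompact K) : ∃ L : ℝ, 0 ≤ L ∧ ∀ z ∈ K, ∀ w ∈ K, ‖g z - g w‖ ≤ L * ‖z - w‖ := by
  obtain ⟨L, hL⟩ := (hg.locallyLipschitzOn (s := K)).exists_lipschitzOnWith_of_compact hK
  exact ⟨L, L.2, fun z hz w hw => hL.norm_sub_le hz hw⟩

theorem exists_norm_sub_le_and_norm_le [ProperSpace X] {U : Type*} [NormedAddCommGroup U]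
    {Ω : Set U} (hΩ : IsCompact Ω) {f : X → U → Y}
    (hf : LocallyLipschitz fun q : X × U => f q.1 q.2) (ρ : ℝ) :
    ∃ L B : ℝ, 0 ≤ L ∧
      (∀ μ ∈ Ω, ∀ z w, ‖z‖ ≤ ρ → ‖w‖ ≤ ρ → ‖f z μ - f w μ‖ ≤ L * ‖z - w‖) ∧
      ∀ μ ∈ Ω, ∀ z, ‖z‖ ≤ ρ → ‖f z μ‖ ≤ B := by
  have hK : IsCompact (Metric.closedBall (0 : X) ρ ×ˢ Ω) := (isCompact_closedBall _ _).prod hΩ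
  obtain ⟨L, hL0, hL⟩ := exists_norm_sub_le_of_locallyLipschitz hf hK
  obtain ⟨B, hB⟩ := hK.exists_bound_of_continuousOn hf.continuous.continuousOn
  have hmem : ∀ {z : X}, ‖z‖ ≤ ρ → ∀ {μ}, μ ∈ Ω → (z, μ) ∈ Metric.closedBall (0 : X) ρ ×ˢ Ω :=
    fun hz _ hμ => ⟨mem_closedBall_zero_iff.2 hz, hμ⟩
  refine ⟨L, B, hL0, fun μ hμ z w hz hw => ?_, fun μ hμ z hz => hB _ (hmem hz hμ)⟩
  simpa [Prod.norm_def] using hL _ (hmem hz hμ) _ (hmem hw hμ)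

end

section

variable {n m p : ℕ} {Ω : Set (EuclideanSpace ℝ (Fin m))}
  {f : EuclideanSpace ℝ (Fin n) → EuclideanSpace ℝ (Fin m) → EuclideanSpace ℝ (Fin n)}
  {h : EuclideanSpace ℝ (Fin n) → EuclideanSpace ℝ (Fin p)}
  {x : ℝ → EuclideanSpace ℝ (Fin n) → (ℝ → EuclideanSpace ℝ (Fin m)) → EuclideanSpace ℝ (Fin n)}
  {d : ℝ → EuclideanSpace ℝ (Fin m)} {μ : EuclideanSpace ℝ (Fin m)} {t : ℝ}

theorem memMOmega_const (hμ : μ ∈ Ω) : MemMOmega Ω fun _ => μ :=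
  ⟨measurable_const, fun _ _ => hμ⟩

/-- The disturbance equal to `μ` before time `t`, and from then on to `d` restarted at time `t`. -/
def switchAt {U : Type*} (t : ℝ) (μ : U) (d : ℝ → U) (r : ℝ) : U := if r < t then μ else d (r - t)

theorem MemMOmega.switchAt (hd : MemMOmega Ω d) (hμ : μ ∈ Ω) :
    MemMOmega Ω (switchAt t μ d) := by
  refine ⟨Measurable.ite measurableSet_Iio measurable_const (hd.1.comp (measurable_id.sub_const t)),
    fun r _ => ?_⟩
  unfold _root_.switchAt
  split_ifs with hr
  exacts [hμ, hd.2 _ (sub_nonneg.2 (not_lt.1 hr))]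

theorem switchAt_of_lt {U : Type*} {μ : U} {d : ℝ → U} {r : ℝ} (hr : r < t) :
    switchAt t μ d r = μ :=
  if_pos hr

theorem switchAt_add {U : Type*} {μ : U} {d : ℝ → U} {s : ℝ} (hs : 0 ≤ s) :
    switchAt t μ d (t + s) = d s := by
  simp only [switchAt, if_neg (not_lt.2 (le_add_of_nonneg_right hs)), add_sub_cancel_left]

theorem IsUBIBS.exists_norm_le (hx : IsUBIBS Ω f x) (R : ℝ) :
    ∃ ρ : ℝ, ∀ ξ d, ‖ξ‖ ≤ R → MemMOmega Ω d → ∀ t, 0 ≤ t → ‖x t ξ d‖ ≤ ρ := by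
  obtain ⟨-, σ, c, hσ, -, hb⟩ := hx
  exact ⟨max (σ R) c, fun ξ d hξ hd t ht =>
    (hb ξ d hd t ht).trans (max_le_max_right _ (hσ.mono (norm_nonneg _) hξ))⟩

theorem IsUBIBS.isIntegralSolution (hx : IsUBIBS Ω f x) (hΩ : IsCompact Ω)
    (hf : Continuous fun q : _ × _ => f q.1 q.2) (ξ) (hd : MemMOmega Ω d) :
    IsIntegralSolution f d ξ fun t => x t ξ d := by
  obtain ⟨ρ, hρ⟩ := hx.exists_norm_le ‖ξ‖
  obtain ⟨B, hB⟩ := ((isCompact_closedBall (0 : EuclideanSpace ℝ (Fin n)) ρ).prod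
    hΩ).exists_bound_of_continuousOn hf.continuousOn
  exact isIntegralSolution_of_norm_le (hf.comp (Continuous.prodMk_right ξ)) hd.1
    (fun t ht => hx.1 ξ d hd t ht)
    fun t ht => hB (_, _) ⟨mem_closedBall_zero_iff.2 (hρ ξ d le_rfl hd t ht), hd.2 t ht⟩

theorem IsUBIBS.exists_norm_switchAt_sub_le (hx : IsUBIBS Ω f x) (hΩ : IsCompact Ω)
    (hf : LocallyLipschitz fun q : _ × _ => f q.1 q.2) (R T : ℝ) :
    ∃ C : ℝ, 0 ≤ C ∧ ∀ ξ η, ‖ξ‖ ≤ R → ‖η‖ ≤ R → ∀ μ ∈ Ω, ∀ t, 0 ≤ t → ∀ d, MemMOmega Ω d →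
      ∀ s ∈ Icc 0 T,
        ‖x s η d - x (t + s) ξ (switchAt t μ d)‖ ≤ C * (‖ξ + t • f ξ μ - η‖ + t ^ 2) := by
  obtain ⟨ρ, hρ⟩ := hx.exists_norm_le R
  obtain ⟨L, B, hL0, hL, hB⟩ := exists_norm_sub_le_and_norm_le hΩ hf (max ρ R)
  refine ⟨max 1 (L * B) * Real.exp (L * T), by positivity,
    fun ξ η hξ hη μ hμ t ht d hd s ⟨hs0, hsT⟩ => ?_⟩
  have hd' : MemMOmega Ω (switchAt t μ d) := hd.switchAt hμ
  have hz := hx.isIntegralSolution hΩ hf.continuous ξ hd'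
  have hw := hx.isIntegralSolution hΩ hf.continuous η hd
  have hzρ : ∀ r, 0 ≤ r → ‖x r ξ (switchAt t μ d)‖ ≤ max ρ R := fun r hr =>
    (hρ ξ _ hξ hd' r hr).trans (le_max_left _ _)
  have hwρ : ∀ r, 0 ≤ r → ‖x r η d‖ ≤ max ρ R := fun r hr =>
    (hρ η _ hη hd r hr).trans (le_max_left _ _)
  have htaylor : ‖x t ξ (switchAt t μ d) - (ξ + t • f ξ μ)‖ ≤ L * B * t ^ 2 :=
    hz.norm_sub_add_smul_le hL0 (fun r hr => hB _ (hd'.2 r hr) _ (hzρ r hr))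
      (fun r hr => hL μ hμ _ _ (hzρ r hr) (hξ.trans (le_max_right _ _))) ht
      fun r _ hrt => switchAt_of_lt hrt
  have hexp := hw.norm_sub_le_mul_exp (hz.shift ht fun r hr => switchAt_add hr) hL0
    (fun r hr => hL _ (hd.2 r hr) _ _ (hwρ r hr) (hzρ _ (add_nonneg ht hr))) hs0
  have hstart : ‖η - x t ξ (switchAt t μ d)‖ ≤ ‖ξ + t • f ξ μ - η‖ + L * B * t ^ 2 := by
    rw [norm_sub_rev]
    linarith [norm_sub_le_norm_sub_add_norm_sub (x t ξ (switchAt t μ d)) (ξ + t • f ξ μ) η]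
  calc ‖x s η d - x (t + s) ξ (switchAt t μ d)‖
      ≤ ‖η - x t ξ (switchAt t μ d)‖ * Real.exp (L * s) := hexp
    _ ≤ (‖ξ + t • f ξ μ - η‖ + L * B * t ^ 2) * Real.exp (L * T) := by
        gcongr
        exact (norm_nonneg _).trans hstart
    _ ≤ (max 1 (L * B) * ‖ξ + t • f ξ μ - η‖ + max 1 (L * B) * t ^ 2) * Real.exp (L * T) := by
        gcongr
        exacts [le_mul_of_one_le_left (norm_nonneg _) (le_max_left _ _), le_max_right _ _]
    _ = max 1 (L * B) * Real.exp (L * T) * (‖ξ + t • f ξ μ - η‖ + t ^ 2) := by ring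

theorem IsUBIBS.exists_output_le_add (hx : IsUBIBS Ω f x) (hΩ : IsCompact Ω)
    (hf : LocallyLipschitz fun q : _ × _ => f q.1 q.2) (hh : LocallyLipschitz h) (R T : ℝ) :
    ∃ C : ℝ, 0 ≤ C ∧ ∀ ξ η, ‖ξ‖ ≤ R → ‖η‖ ≤ R → ∀ μ ∈ Ω, ∀ t, 0 ≤ t → ∀ d, MemMOmega Ω d →
      ∀ s ∈ Icc 0 T, ‖h (x s η d)‖ ≤
        ‖h (x (t + s) ξ (switchAt t μ d))‖ + C * (‖ξ + t • f ξ μ - η‖ + t ^ 2) := by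
  obtain ⟨ρ, hρ⟩ := hx.exists_norm_le R
  obtain ⟨C, hC0, hC⟩ := hx.exists_norm_switchAt_sub_le hΩ hf R T
  obtain ⟨K, hK0, hK⟩ := exists_norm_sub_le_of_locallyLipschitz hh (isCompact_closedBall 0 ρ)
  refine ⟨K * C, mul_nonneg hK0 hC0, fun ξ η hξ hη μ hμ t ht d hd s hs => ?_⟩
  have hmemη : x s η d ∈ Metric.closedBall 0 ρ := mem_closedBall_zero_iff.2 (hρ η d hη hd s hs.1)
  have hmemξ : x (t + s) ξ (switchAt t μ d) ∈ Metric.closedBall 0 ρ :=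
    mem_closedBall_zero_iff.2 (hρ ξ _ hξ (hd.switchAt hμ) _ (add_nonneg ht hs.1))
  rw [← sub_le_iff_le_add']
  calc ‖h (x s η d)‖ - ‖h (x (t + s) ξ (switchAt t μ d))‖
      ≤ ‖h (x s η d) - h (x (t + s) ξ (switchAt t μ d))‖ := norm_sub_norm_le _ _
    _ ≤ K * ‖x s η d - x (t + s) ξ (switchAt t μ d)‖ := hK _ hmemη _ hmemξ
    _ ≤ K * (C * (‖ξ + t • f ξ μ - η‖ + t ^ 2)) :=
        mul_le_mul_of_nonneg_left (hC ξ η hξ hη μ hμ t ht d hd s hs) hK0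
    _ = K * C * (‖ξ + t • f ξ μ - η‖ + t ^ 2) := (mul_assoc _ _ _).symm

theorem IsUBIBS.isDecayingOutput (hx : IsUBIBS Ω f x) (hΩ : IsCompact Ω)
    (hf : LocallyLipschitz fun q : _ × _ => f q.1 q.2) (hh : LocallyLipschitz h)
    {β : ℝ → ℝ → ℝ} (hβ : IsClassKL β) {q : EuclideanSpace ℝ (Fin n) → ℝ} (hq0 : ∀ ξ, 0 ≤ q ξ)
    (hb : ∀ ξ d, MemMOmega Ω d → ∀ t ∈ Ici (0 : ℝ), ‖h (x t ξ d)‖ ≤ β (q ξ) t) :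
    IsDecayingOutput Ω f β q fun (d : {d // MemMOmega Ω d}) ξ t => ‖h (x t ξ d)‖ where
  isClassKL := hβ
  gauge_nonneg := hq0
  nonneg _ _ _ := norm_nonneg _
  le_apply d ξ t ht := hb ξ d d.2 t ht
  exists_le_add R T := by
    obtain ⟨C, hC0, hC⟩ := hx.exists_output_le_add hΩ hf hh R T
    exact ⟨C, hC0, fun ξ η hξ hη μ hμ t ht d s hs =>
      ⟨⟨_, d.2.switchAt hμ⟩, hC ξ η hξ hη μ hμ t ht d d.2 s hs⟩⟩

theorem IsUBIBS.exists_continuous_robustDecay (hx : IsUBIBS Ω f x) (hΩ : IsCompact Ω)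
    (hf : LocallyLipschitz fun q : _ × _ => f q.1 q.2) (hh : LocallyLipschitz h)
    {β : ℝ → ℝ → ℝ} (hβ : IsClassKL β) {q : EuclideanSpace ℝ (Fin n) → ℝ} (hq : Continuous q)
    (hq0 : ∀ ξ, 0 ≤ q ξ)
    (hb : ∀ ξ d, MemMOmega Ω d → ∀ t ∈ Ici (0 : ℝ), ‖h (x t ξ d)‖ ≤ β (q ξ) t) :
    ∃ V : EuclideanSpace ℝ (Fin n) → ℝ, Continuous V ∧ (∀ ξ, ‖h ξ‖ ≤ V ξ) ∧
      (∀ ξ c, ‖h ξ‖ ≤ c → (∀ d, MemMOmega Ω d → ∀ t ∈ Ici (0 : ℝ), ‖h (x t ξ d)‖ ≤ c) →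
        V ξ ≤ 2 * c) ∧
      ∀ a, 0 < a → ∃ θ : ℝ → ℝ, Continuous θ ∧ (∀ b, 0 < θ b) ∧
        RobustDecay Ω f V a fun ξ => θ (q ξ) := by
  rcases Ω.eq_empty_or_nonempty with rfl | hne
  · -- No disturbance is admissible, so the supremum would run over the empty set.
    refine ⟨fun ξ => ‖h ξ‖, hh.continuous.norm, fun _ => le_rfl,
      fun ξ c hc _ => by linarith [norm_nonneg (h ξ)], fun a _ => ⟨fun _ => 1, continuous_const,
      fun _ => one_pos, fun R => ⟨1, one_pos, fun ξ _ _ μ hμ => absurd hμ (notMem_empty μ)⟩⟩⟩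
  · have hy := hx.isDecayingOutput hΩ hf hh hβ hq0 hb
    obtain ⟨μ, hμ⟩ := hne
    refine ⟨_, hy.continuous_outputSup ⟨μ, hμ⟩ hq, fun ξ => ?_, fun ξ c hc hd => ?_,
      fun a ha => hy.exists_robustDecay_outputSup hΩ hf.continuous hq ha⟩
    · have hinit := hy.apply_zero_le_outputSup ⟨_, memMOmega_const hμ⟩ ξ
      rwa [(hx.isIntegralSolution hΩ hf.continuous ξ (memMOmega_const hμ)).apply_zero] at hinit
    · exact hy.outputSup_le_two_mul ((norm_nonneg _).trans hc) fun d t ht => hd d d.2 t ht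

theorem IsUBIBS.exists_contDiff_decaysOnBands (hx : IsUBIBS Ω f x) (hΩ : IsCompact Ω)
    (hf : LocallyLipschitz fun q : _ × _ => f q.1 q.2) (hh : LocallyLipschitz h)
    {β : ℝ → ℝ → ℝ} (hβ : IsClassKL β) {q : EuclideanSpace ℝ (Fin n) → ℝ} (hq : Continuous q)
    (hq0 : ∀ ξ, 0 ≤ q ξ)
    (hb : ∀ ξ d, MemMOmega Ω d → ∀ t ∈ Ici (0 : ℝ), ‖h (x t ξ d)‖ ≤ β (q ξ) t) :
    ∃ (W : EuclideanSpace ℝ (Fin n) → ℝ) (Φ : ℝ → ℝ), ContDiff ℝ (⊤ : ℕ∞) W ∧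
      IsClassKInfty Φ ∧ (∀ ξ, 0 ≤ W ξ) ∧ (∀ ξ, Φ ‖h ξ‖ ≤ W ξ) ∧
      (∀ ξ c, ‖h ξ‖ ≤ c → (∀ d, MemMOmega Ω d → ∀ t ∈ Ici (0 : ℝ), ‖h (x t ξ d)‖ ≤ c) →
        W ξ ≤ 4 * c) ∧
      DecaysOnBands Ω f W q := by
  obtain ⟨V, hV, hhV, hVle, hdec⟩ := hx.exists_continuous_robustDecay hΩ hf hh hβ hq hq0 hb
  obtain ⟨W, Φ, hW, hΦ, hWV, hWd⟩ := _root_.exists_contDiff_decaysOnBands hΩ hf.continuous hV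
    (fun ξ => (norm_nonneg _).trans (hhV ξ)) hq hq0 hdec
  refine ⟨W, Φ, hW, hΦ, fun ξ => (hWV ξ).1,
    fun ξ => (hΦ.1.mono (norm_nonneg _) (hhV ξ)).trans (hWV ξ).2.1, fun ξ c hc hd => ?_, hWd⟩
  linarith [(hWV ξ).2.2, hVle ξ c hc hd]

end

/-! ### Lyapunov functions -/

section

variable {n m p : ℕ} {Ω : Set (EuclideanSpace ℝ (Fin m))}
  {f : EuclideanSpace ℝ (Fin n) → EuclideanSpace ℝ (Fin m) → EuclideanSpace ℝ (Fin n)}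
  {h : EuclideanSpace ℝ (Fin n) → EuclideanSpace ℝ (Fin p)}
  {x : ℝ → EuclideanSpace ℝ (Fin n) → (ℝ → EuclideanSpace ℝ (Fin m)) → EuclideanSpace ℝ (Fin n)}

/-- There is a smooth Lyapunov function for the output `h`, bounded above by a `K∞` function of the
gauge `ω` and decaying at a rate that depends on its value and on the norm of the state. -/
def HasLyapunovFunction (Ω : Set (EuclideanSpace ℝ (Fin m)))
    (f : EuclideanSpace ℝ (Fin n) → EuclideanSpace ℝ (Fin m) → EuclideanSpace ℝ (Fin n))
    (h : EuclideanSpace ℝ (Fin n) → EuclideanSpace ℝ (Fin p))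
    (ω : EuclideanSpace ℝ (Fin n) → ℝ) : Prop :=
  ∃ (V : EuclideanSpace ℝ (Fin n) → ℝ) (α₁ α₂ : ℝ → ℝ) (α₃ : ℝ → ℝ → ℝ),
    ContDiff ℝ (⊤ : ℕ∞) V ∧ (∀ ξ, 0 ≤ V ξ) ∧
    IsClassKInfty α₁ ∧ IsClassKInfty α₂ ∧
    (∀ r ∈ Ici (0 : ℝ), IsClassK fun s => α₃ s r) ∧
    (∀ s ∈ Ici (0 : ℝ), AntitoneOn (fun r => α₃ s r) (Ici 0)) ∧
    (∀ ξ, α₁ ‖h ξ‖ ≤ V ξ ∧ V ξ ≤ α₂ (ω ξ)) ∧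
    (∀ ξ, ∀ μ ∈ Ω, fderiv ℝ V ξ (f ξ μ) ≤ -α₃ (V ξ) ‖ξ‖)

/-- There is a smooth Lyapunov function for the output `h`, bounded above by a `K∞` function of the
gauge `ω` and decaying at a rate that depends on its value only. -/
def HasStateIndependentLyapunovFunction (Ω : Set (EuclideanSpace ℝ (Fin m)))
    (f : EuclideanSpace ℝ (Fin n) → EuclideanSpace ℝ (Fin m) → EuclideanSpace ℝ (Fin n))
    (h : EuclideanSpace ℝ (Fin n) → EuclideanSpace ℝ (Fin p))
    (ω : EuclideanSpace ℝ (Fin n) → ℝ) : Prop :=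
  ∃ (V : EuclideanSpace ℝ (Fin n) → ℝ) (α₁ α₂ α₃ : ℝ → ℝ),
    ContDiff ℝ (⊤ : ℕ∞) V ∧ (∀ ξ, 0 ≤ V ξ) ∧
    IsClassKInfty α₁ ∧ IsClassKInfty α₂ ∧ IsClassK α₃ ∧
    (∀ ξ, α₁ ‖h ξ‖ ≤ V ξ ∧ V ξ ≤ α₂ (ω ξ)) ∧
    (∀ ξ, ∀ μ ∈ Ω, fderiv ℝ V ξ (f ξ μ) ≤ -α₃ (V ξ))

theorem IsUBIBS.hasLyapunovFunction (hx : IsUBIBS Ω f x) (hΩ : IsCompact Ω)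
    (hf : LocallyLipschitz fun q : _ × _ => f q.1 q.2) (hh : LocallyLipschitz h)
    (hUOS : IsUOS Ω h x) {ω : EuclideanSpace ℝ (Fin n) → ℝ} {σ : ℝ → ℝ} (hσ : IsClassKInfty σ)
    (hhσ : ∀ ξ, ‖h ξ‖ ≤ σ (ω ξ))
    (hyσ : ∀ ξ d, MemMOmega Ω d → ∀ t ∈ Ici (0 : ℝ), ‖h (x t ξ d)‖ ≤ σ (ω ξ)) :
    HasLyapunovFunction Ω f h ω := by
  obtain ⟨β, hβ, hb⟩ := hUOS
  obtain ⟨W, Φ, hW, hΦ, hW0, hΦW, hWle, hWd⟩ := hx.exists_contDiff_decaysOnBands hΩ hf hh hβ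
    continuous_norm norm_nonneg hb
  obtain ⟨α₃, hα₃, hα₃anti, hα₃W⟩ := hWd.exists_classK_rate hW0
  exact ⟨W, Φ, fun s => 4 * σ s, α₃, hW, hW0, hΦ, hσ.const_mul four_pos, fun r _ => hα₃ r,
    fun s _ => (hα₃anti s).antitoneOn _, fun ξ => ⟨hΦW ξ, hWle ξ _ (hhσ ξ) (hyσ ξ)⟩, hα₃W⟩

theorem IsUBIBS.hasLyapunovFunction_norm (hx : IsUBIBS Ω f x) (hΩ : IsCompact Ω)
    (hf : LocallyLipschitz fun q : _ × _ => f q.1 q.2) (hh : LocallyLipschitz h) (hh0 : h 0 = 0)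
    (hUOS : IsUOS Ω h x) : HasLyapunovFunction Ω f h fun ξ => ‖ξ‖ := by
  obtain ⟨β, hβ, hb⟩ := id hUOS
  obtain ⟨γ, hγ, hγh⟩ := exists_classKInfty_norm_le hh.continuous hh0
  have hβ0 : IsClassK fun s => β s 0 := hβ.1 0 self_mem_Ici
  refine hx.hasLyapunovFunction hΩ hf hh hUOS (hβ0.add_classKInfty hγ) (fun ξ => ?_)
    fun ξ d hd t ht => ?_
  · linarith [hγh ξ, hβ0.nonneg (norm_nonneg ξ)]
  · linarith [hb ξ d hd t ht, hβ.le_apply_zero (norm_nonneg ξ) ht, hγ.1.nonneg (norm_nonneg ξ)]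

theorem IsUBIBS.hasLyapunovFunction_output (hx : IsUBIBS Ω f x) (hΩ : IsCompact Ω)
    (hf : LocallyLipschitz fun q : _ × _ => f q.1 q.2) (hh : LocallyLipschitz h)
    (hUOS : IsUOS Ω h x) {σ₀ : ℝ → ℝ} (hσ₀ : IsClassK σ₀)
    (hb : ∀ ξ d, MemMOmega Ω d → ∀ t ∈ Ici (0 : ℝ), ‖h (x t ξ d)‖ ≤ σ₀ ‖h ξ‖) :
    HasLyapunovFunction Ω f h fun ξ => ‖h ξ‖ :=
  hx.hasLyapunovFunction hΩ hf hh hUOS (hσ₀.add_classKInfty isClassKInfty_id)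
    (fun _ => le_add_of_nonneg_left (hσ₀.nonneg (norm_nonneg _)))
    fun ξ d hd t ht => (hb ξ d hd t ht).trans (le_add_of_nonneg_right (norm_nonneg _))

theorem IsUBIBS.hasStateIndependentLyapunovFunction (hx : IsUBIBS Ω f x) (hΩ : IsCompact Ω)
    (hf : LocallyLipschitz fun q : _ × _ => f q.1 q.2) (hh : LocallyLipschitz h)
    {β : ℝ → ℝ → ℝ} (hβ : IsClassKL β)
    (hb : ∀ ξ d, MemMOmega Ω d → ∀ t ∈ Ici (0 : ℝ), ‖h (x t ξ d)‖ ≤ β ‖h ξ‖ t) :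
    HasStateIndependentLyapunovFunction Ω f h fun ξ => ‖h ξ‖ := by
  obtain ⟨Y, Φ, hY, hΦ, hY0, hΦY, hYle, hYd⟩ := hx.exists_contDiff_decaysOnBands hΩ hf hh hβ
    hh.continuous.norm (fun _ => norm_nonneg _) hb
  have hYdiff : Differentiable ℝ Y := hY.differentiable (by simp)
  obtain ⟨Ψ, hΨ, hΨK, hΨd⟩ := (hYd.of_classKInfty_le hΦ hΦY).exists_rescaling hYdiff hY0
  have hV0 : ∀ ξ, 0 ≤ Ψ (Y ξ) := fun ξ => hΨK.1.nonneg (hY0 ξ)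
  obtain ⟨γ, hγ, -, hγY⟩ := hΨd.exists_classK_rate hV0
  have hβ0 : IsClassK fun s => β s 0 := hβ.1 0 self_mem_Ici
  have hle : ∀ ξ, Y ξ ≤ 4 * (β ‖h ξ‖ 0 + ‖h ξ‖) := fun ξ =>
    hYle ξ _ (le_add_of_nonneg_left (hβ0.nonneg (norm_nonneg _))) fun d hd t ht =>
      ((hb ξ d hd t ht).trans (hβ.le_apply_zero (norm_nonneg _) ht)).trans
        (le_add_of_nonneg_right (norm_nonneg _))
  exact ⟨fun ξ => Ψ (Y ξ), _, _, fun s => γ s 0, hΨ.comp hY, hV0, hΨK.comp hΦ,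
    hΨK.comp ((hβ0.add_classKInfty isClassKInfty_id).const_mul four_pos), hγ 0,
    fun ξ => ⟨hΨK.1.mono (hΦ.1.nonneg (norm_nonneg _)) (hΦY ξ), hΨK.1.mono (hY0 ξ) (hle ξ)⟩, hγY⟩

end

theorem exists_lyapunov_of_ubibs_uos_general {n m p : ℕ} {Ω : Set (EuclideanSpace ℝ (Fin m))}
    (hΩ : IsCompact Ω)
    {f : EuclideanSpace ℝ (Fin n) → EuclideanSpace ℝ (Fin m) → EuclideanSpace ℝ (Fin n)}
    {h : EuclideanSpace ℝ (Fin n) → EuclideanSpace ℝ (Fin p)}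
    {x : ℝ → EuclideanSpace ℝ (Fin n) → (ℝ → EuclideanSpace ℝ (Fin m)) →
      EuclideanSpace ℝ (Fin n)}
    (hf : LocallyLipschitz fun q : EuclideanSpace ℝ (Fin n) × EuclideanSpace ℝ (Fin m) =>
      f q.1 q.2)
    (hh : LocallyLipschitz h) (hh0 : h 0 = 0) (hx : IsUBIBS Ω f x) (hUOS : IsUOS Ω h x) :
    HasLyapunovFunction Ω f h (fun ξ => ‖ξ‖) ∧
    ((∃ σ₀ : ℝ → ℝ, IsClassK σ₀ ∧
        ∀ ξ d, MemMOmega Ω d → ∀ t ∈ Ici (0 : ℝ), ‖h (x t ξ d)‖ ≤ σ₀ ‖h ξ‖) →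
      HasLyapunovFunction Ω f h fun ξ => ‖h ξ‖) ∧
    ((∃ β : ℝ → ℝ → ℝ, IsClassKL β ∧
        ∀ ξ d, MemMOmega Ω d → ∀ t ∈ Ici (0 : ℝ), ‖h (x t ξ d)‖ ≤ β ‖h ξ‖ t) →
      HasStateIndependentLyapunovFunction Ω f h fun ξ => ‖h ξ‖) :=
  ⟨hx.hasLyapunovFunction_norm hΩ hf hh hh0 hUOS,
    fun ⟨_, hσ₀, hb⟩ => hx.hasLyapunovFunction_output hΩ hf hh hUOS hσ₀ hb,
    fun ⟨_, hβ, hb⟩ => hx.hasStateIndependentLyapunovFunction hΩ hf hh hβ hb⟩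

/-- Converse Lyapunov theorem for uniformly output stable disturbance systems. -/
theorem exists_lyapunov_of_ubibs_uos {n m p : ℕ} (Ω : Set (EuclideanSpace ℝ (Fin m)))
    (hΩ : IsCompact Ω)
    (f : EuclideanSpace ℝ (Fin n) → EuclideanSpace ℝ (Fin m) → EuclideanSpace ℝ (Fin n))
    (h : EuclideanSpace ℝ (Fin n) → EuclideanSpace ℝ (Fin p))
    (x : ℝ → EuclideanSpace ℝ (Fin n) → (ℝ → EuclideanSpace ℝ (Fin m)) →
      EuclideanSpace ℝ (Fin n))
    (hf : LocallyLipschitz fun q : EuclideanSpace ℝ (Fin n) × EuclideanSpace ℝ (Fin m) =>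
      f q.1 q.2)
    (hf0 : f 0 0 = 0)
    (hh : LocallyLipschitz h) (hh0 : h 0 = 0)
    (hUBIBS : IsUBIBS Ω f x) (hUOS : IsUOS Ω h x) :
    (∃ (V : EuclideanSpace ℝ (Fin n) → ℝ) (α₁ α₂ : ℝ → ℝ) (α₃ : ℝ → ℝ → ℝ),
      ContDiff ℝ (⊤:ℕ∞) V ∧ (∀ ξ, 0 ≤ V ξ) ∧
      IsClassKInfty α₁ ∧ IsClassKInfty α₂ ∧
      (∀ r ∈ Ici (0:ℝ), IsClassK fun s => α₃ s r) ∧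
      (∀ s ∈ Ici (0:ℝ), AntitoneOn (fun r => α₃ s r) (Ici 0)) ∧
      (∀ ξ, α₁ ‖h ξ‖ ≤ V ξ ∧ V ξ ≤ α₂ ‖ξ‖) ∧
      (∀ ξ, ∀ μ ∈ Ω, fderiv ℝ V ξ (f ξ μ) ≤ -α₃ (V ξ) ‖ξ‖)) ∧
    ((∃ σ₀ : ℝ → ℝ, IsClassK σ₀ ∧
        ∀ ξ d, MemMOmega Ω d → ∀ t ∈ Ici (0:ℝ), ‖h (x t ξ d)‖ ≤ σ₀ ‖h ξ‖) →
      ∃ (V : EuclideanSpace ℝ (Fin n) → ℝ) (α₁ α₂ : ℝ → ℝ) (α₃ : ℝ → ℝ → ℝ),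
        ContDiff ℝ (⊤:ℕ∞) V ∧ (∀ ξ, 0 ≤ V ξ) ∧
        IsClassKInfty α₁ ∧ IsClassKInfty α₂ ∧
        (∀ r ∈ Ici (0:ℝ), IsClassK fun s => α₃ s r) ∧
        (∀ s ∈ Ici (0:ℝ), AntitoneOn (fun r => α₃ s r) (Ici 0)) ∧
        (∀ ξ, α₁ ‖h ξ‖ ≤ V ξ ∧ V ξ ≤ α₂ ‖h ξ‖) ∧
        (∀ ξ, ∀ μ ∈ Ω, fderiv ℝ V ξ (f ξ μ) ≤ -α₃ (V ξ) ‖ξ‖)) ∧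
    ((∃ β : ℝ → ℝ → ℝ, IsClassKL β ∧
        ∀ ξ d, MemMOmega Ω d → ∀ t ∈ Ici (0:ℝ), ‖h (x t ξ d)‖ ≤ β ‖h ξ‖ t) →
      ∃ (V : EuclideanSpace ℝ (Fin n) → ℝ) (α₁ α₂ α₃ : ℝ → ℝ),
        ContDiff ℝ (⊤:ℕ∞) V ∧ (∀ ξ, 0 ≤ V ξ) ∧
        IsClassKInfty α₁ ∧ IsClassKInfty α₂ ∧ IsClassK α₃ ∧
        (∀ ξ, α₁ ‖h ξ‖ ≤ V ξ ∧ V ξ ≤ α₂ ‖h ξ‖) ∧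
        (∀ ξ, ∀ μ ∈ Ω, fderiv ℝ V ξ (f ξ μ) ≤ -α₃ (V ξ))) :=
  exists_lyapunov_of_ubibs_uos_general hΩ hf hh hh0 hUBIBS hUOS
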